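/- Let c be a maximal composition with at least 3 parts. Then c can be written as c = x_0 ⊕ (3) ⊕ x_1 ⊕ (3) ⊕ ⋯ ⊕ (3) ⊕ x_k for some k ≥ 1 and compositions x_0, x_1, …, x_k (possibly empty) such that x_0 ∈ {ε, (4)}, x_k ∈ {ε, (2), (2,2)}, and x_i ∈ {ε, (2), (4)} for each i with 1 ≤ i ≤ k−1. -/

import Mathlib

/-- `i` (1-based, with `1 < i < n`) is a peak of the permutation `σ` of `{1,…,n}`
(represented as a permutation of `Fin n`, position `j` (1-based) being index `j-1`). -/
def IsPeak {n : ℕ} (σ : Equiv.Perm (Fin n)) (i : ℕ) : Prop :=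
  ∃ (h₂ : 2 ≤ i) (h₃ : i < n),
    σ ⟨i - 2, by omega⟩ < σ ⟨i - 1, by omega⟩ ∧ σ ⟨i, h₃⟩ < σ ⟨i - 1, by omega⟩

open Classical in
/-- The peak set of a permutation of `{1,…,n}` (as a set of 1-based positions). -/
noncomputable def peakSet {n : ℕ} (σ : Equiv.Perm (Fin n)) : Finset ℕ :=
  (Finset.range n).filter (fun i => IsPeak σ i)

/-- `P(S;n)`: the number of permutations of `{1,…,n}` with peak set `S`. -/
noncomputable def numPeakSet (n : ℕ) (S : Finset ℕ) : ℕ :=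
  Nat.card {σ : Equiv.Perm (Fin n) // peakSet σ = S}

/-- `c` is a composition of `n`: a list of positive integers summing to `n`. -/
def IsComposition (n : ℕ) (c : List ℕ) : Prop :=
  (∀ x ∈ c, 0 < x) ∧ c.sum = n

/-- The set `S(c)` of proper partial sums of the composition `c`. -/
def compPeaks (c : List ℕ) : Finset ℕ :=
  (Finset.range (c.length - 1)).image (fun i => (c.take (i + 1)).sum)

/-- `P(c)`: the number of permutations of `{1,…,|c|}` whose peak set is `S(c)`. -/
noncomputable def Pcomp (c : List ℕ) : ℕ :=
  numPeakSet c.sum (compPeaks c)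

/-- A composition is maximal if `P(b) ≤ P(c)` for every composition `b` of the same size. -/
def IsMaximal (c : List ℕ) : Prop :=
  ∀ b : List ℕ, IsComposition c.sum b → Pcomp b ≤ Pcomp c

/-- `chain3 c k = c 0 ⊕ (3) ⊕ c 1 ⊕ (3) ⊕ ⋯ ⊕ (3) ⊕ c k`. -/
def chain3 (c : ℕ → List ℕ) : ℕ → List ℕ
  | 0 => c 0
  | k + 1 => chain3 c k ++ [3] ++ c (k + 1)

section helpers
open MeasureTheory intervalIntegral

noncomputable def Wk (a : ℕ) (x y : ℝ) : ℝ :=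
  ((x + y) ^ (a - 1) - |x - y| ^ (a - 1)) / (2 * ((a - 1).factorial : ℝ))

noncomputable def Kk : List ℕ → ℝ → ℝ → ℝ
  | [], _, _ => 0
  | [a], x, y => Wk a x y
  | a :: b :: l, x, y => ∫ t in (0:ℝ)..1, Wk a x t * Kk (b :: l) t y

theorem Wk_cont (a : ℕ) : Continuous (fun p : ℝ × ℝ => Wk a p.1 p.2) := by
  unfold Wk
  fun_prop

theorem Wk_symm (a : ℕ) (x y : ℝ) : Wk a x y = Wk a y x := by
  unfold Wk
  rw [add_comm x y, abs_sub_comm]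

theorem Wk_pos {a : ℕ} (ha : 2 ≤ a) {x y : ℝ} (hx : 0 < x) (hy : 0 < y) : 0 < Wk a x y := by
  unfold Wk
  apply div_pos _ (by positivity)
  have : |x - y| < x + y := by
    rw [abs_lt]; constructor <;> linarith
  have := pow_lt_pow_left₀ this (abs_nonneg _) (n := a - 1) (by omega)
  linarith

theorem Wk_nonneg {a : ℕ} {x y : ℝ} (hx : 0 ≤ x) (hy : 0 ≤ y) : 0 ≤ Wk a x y := by
  unfold Wk
  apply div_nonneg _ (by positivity)
  have : |x - y| ≤ x + y := by
    rw [abs_le]; constructor <;> linarith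
  have := pow_le_pow_left₀ (abs_nonneg _) this (a - 1)
  linarith

theorem Wk_one (x y : ℝ) : Wk 1 x y = 0 := by simp [Wk]

theorem Kk_cons (a : ℕ) {l : List ℕ} (hl : l ≠ []) (x y : ℝ) :
    Kk (a :: l) x y = ∫ t in (0:ℝ)..1, Wk a x t * Kk l t y := by
  cases l with
  | nil => exact absurd rfl hl
  | cons b l => rfl

theorem Kk_cont (l : List ℕ) : Continuous (fun p : ℝ × ℝ => Kk l p.1 p.2) := by
  induction l with
  | nil => simp only [Kk]; fun_prop
  | cons a l ih =>
    by_cases hl : l = []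
    · subst hl; exact Wk_cont a
    · simp only [Kk_cons a hl]
      apply intervalIntegral.continuous_parametric_intervalIntegral_of_continuous' (μ := volume)
      have h1 : Continuous (fun q : (ℝ × ℝ) × ℝ => Wk a q.1.1 q.2) :=
        (Wk_cont a).comp (f := fun q : (ℝ × ℝ) × ℝ => (q.1.1, q.2)) (by fun_prop)
      have h2 : Continuous (fun q : (ℝ × ℝ) × ℝ => Kk l q.2 q.1.2) :=
        ih.comp (f := fun q : (ℝ × ℝ) × ℝ => (q.2, q.1.2)) (by fun_prop)
      exact h1.mul h2

theorem Kk_cont1 (l : List ℕ) (y : ℝ) : Continuous (fun x => Kk l x y) :=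
  (Kk_cont l).comp (f := fun x => (x, y)) (by fun_prop)

theorem Kk_cont2 (l : List ℕ) (x : ℝ) : Continuous (fun y => Kk l x y) :=
  (Kk_cont l).comp (f := fun y => (x, y)) (by fun_prop)

theorem Wk_cont1 (a : ℕ) (y : ℝ) : Continuous (fun x => Wk a x y) :=
  (Wk_cont a).comp (f := fun x => (x, y)) (by fun_prop)

theorem Wk_cont2 (a : ℕ) (x : ℝ) : Continuous (fun y => Wk a x y) :=
  (Wk_cont a).comp (f := fun y => (x, y)) (by fun_prop)

theorem int_pos {f : ℝ → ℝ} (hf : Continuous f) (h : ∀ x ∈ Set.Ioo (0:ℝ) 1, 0 < f x) :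
    0 < ∫ x in (0:ℝ)..1, f x :=
  intervalIntegral.intervalIntegral_pos_of_pos_on (hf.intervalIntegrable _ _)
    (fun x hx => h x hx) one_pos

theorem int_lt {f g : ℝ → ℝ} (hf : Continuous f) (hg : Continuous g)
    (h : ∀ x ∈ Set.Ioo (0:ℝ) 1, f x < g x) :
    ∫ x in (0:ℝ)..1, f x < ∫ x in (0:ℝ)..1, g x := by
  have : 0 < ∫ x in (0:ℝ)..1, (g x - f x) :=
    int_pos (hg.sub hf) (fun x hx => sub_pos.2 (h x hx))
  rw [intervalIntegral.integral_sub (hg.intervalIntegrable _ _) (hf.intervalIntegrable _ _)] at this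
  linarith

theorem int_le {f g : ℝ → ℝ} (hf : Continuous f) (hg : Continuous g)
    (h : ∀ x ∈ Set.Icc (0:ℝ) 1, f x ≤ g x) :
    ∫ x in (0:ℝ)..1, f x ≤ ∫ x in (0:ℝ)..1, g x :=
  intervalIntegral.integral_mono_on zero_le_one (hf.intervalIntegrable _ _)
    (hg.intervalIntegrable _ _) h

theorem Kk_pos {l : List ℕ} (hl : l ≠ []) (h2 : ∀ a ∈ l, 2 ≤ a) {x y : ℝ}
    (hx : 0 < x) (hy : 0 < y) : 0 < Kk l x y := by
  induction l generalizing x with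
  | nil => exact absurd rfl hl
  | cons a l ih =>
    by_cases hl' : l = []
    · subst hl'; exact Wk_pos (h2 a (by simp)) hx hy
    · rw [Kk_cons a hl']
      apply int_pos ((Wk_cont2 a x).mul (Kk_cont1 l y))
      intro t ht
      exact mul_pos (Wk_pos (h2 a (by simp)) hx ht.1)
        (ih hl' (fun b hb => h2 b (by simp [hb])) ht.1)

theorem Kk_one_mem {l : List ℕ} (h1 : 1 ∈ l) (x y : ℝ) : Kk l x y = 0 := by
  induction l generalizing x with
  | nil => rfl
  | cons a l ih =>
    by_cases hl' : l = []
    · subst hl'; simp at h1; subst h1; exact Wk_one x y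
    · rw [Kk_cons a hl']
      rcases List.mem_cons.1 h1 with h | h
      · subst h; simp [Wk_one]
      · simp [ih h]

theorem int_swap_bdd {f : ℝ → ℝ → ℝ} (hf : Measurable (fun p : ℝ × ℝ => f p.1 p.2))
    {a b C : ℝ} (ha : 0 ≤ a) (hab : a ≤ b) (hb : b ≤ 1)
    (hC : ∀ x y, 0 ≤ x → x ≤ 1 → 0 ≤ y → y ≤ 1 → |f x y| ≤ C) :
    ∫ x in a..b, ∫ y in (0:ℝ)..1, f x y = ∫ y in (0:ℝ)..1, ∫ x in a..b, f x y := by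
  apply MeasureTheory.intervalIntegral_intervalIntegral_swap
  rw [Set.uIoc_of_le hab, Set.uIoc_of_le zero_le_one]
  apply Measure.integrableOn_of_bounded (M := C)
  · exact ((Metric.isBounded_Ioc a b).prod (Metric.isBounded_Ioc 0 1)).measure_lt_top.ne
  · exact hf.aestronglyMeasurable
  · rw [ae_restrict_iff' (measurableSet_Ioc.prod measurableSet_Ioc)]
    refine Filter.Eventually.of_forall ?_
    rintro ⟨x, y⟩ ⟨⟨h1, h2⟩, h3, h4⟩
    exact hC x y (by linarith) (by linarith) h3.le h4

theorem int_swap {f : ℝ → ℝ → ℝ} (hf : Continuous (fun p : ℝ × ℝ => f p.1 p.2)) :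
    ∫ x in (0:ℝ)..1, ∫ y in (0:ℝ)..1, f x y = ∫ y in (0:ℝ)..1, ∫ x in (0:ℝ)..1, f x y := by
  obtain ⟨C, hC⟩ := (isCompact_Icc.prod isCompact_Icc : IsCompact
    (Set.Icc (0:ℝ) 1 ×ˢ Set.Icc (0:ℝ) 1)).exists_bound_of_continuousOn hf.continuousOn
  exact int_swap_bdd hf.measurable le_rfl zero_le_one le_rfl
    (fun x y h1 h2 h3 h4 => hC (x, y) ⟨⟨h1, h2⟩, h3, h4⟩)

theorem Kk_append {L R : List ℕ} (hL : L ≠ []) (hR : R ≠ []) (x y : ℝ) :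
    Kk (L ++ R) x y = ∫ t in (0:ℝ)..1, Kk L x t * Kk R t y := by
  induction L generalizing x with
  | nil => exact absurd rfl hL
  | cons a L ih =>
    by_cases hL' : L = []
    · subst hL'; simp [Kk_cons a hR, Kk]
    · rw [List.cons_append, Kk_cons a (by simp [hL'])]
      simp only [ih hL', Kk_cons a hL', ← intervalIntegral.integral_const_mul,
        ← intervalIntegral.integral_mul_const]
      rw [int_swap]
      · simp only [mul_assoc]
      · have h1 : Continuous (fun q : ℝ × ℝ => Wk a x q.1) := (Wk_cont2 a x).comp continuous_fst
        have h2 : Continuous (fun q : ℝ × ℝ => Kk R q.2 y) := (Kk_cont1 R y).comp continuous_snd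
        exact h1.mul ((Kk_cont L).mul h2)

/-- Replacement principle. -/
theorem Kk_replace {L R B B' : List ℕ} (hB : B ≠ []) (hB' : B' ≠ [])
    (hL2 : ∀ a ∈ L, 2 ≤ a) (hR2 : ∀ a ∈ R, 2 ≤ a)
    (h : ∀ x y : ℝ, (L = [] ∧ x = 1 ∨ L ≠ [] ∧ 0 < x ∧ x < 1) →
      (R = [] ∧ y = 1 ∨ R ≠ [] ∧ 0 < y ∧ y < 1) → Kk B x y < Kk B' x y) :
    Kk (L ++ (B ++ R)) 1 1 < Kk (L ++ (B' ++ R)) 1 1 := by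
  have key : ∀ x : ℝ, (L = [] ∧ x = 1 ∨ L ≠ [] ∧ 0 < x ∧ x < 1) →
      Kk (B ++ R) x 1 < Kk (B' ++ R) x 1 := by
    intro x hx
    by_cases hR : R = []
    · subst hR; simpa using h x 1 hx (by simp)
    · rw [Kk_append hB hR, Kk_append hB' hR]
      apply int_lt ((Kk_cont2 _ _).mul (Kk_cont1 _ _)) ((Kk_cont2 _ _).mul (Kk_cont1 _ _))
      intro t ht
      exact mul_lt_mul_of_pos_right (h x t hx (Or.inr ⟨hR, ht.1, ht.2⟩))
        (Kk_pos hR hR2 ht.1 one_pos)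
  by_cases hL : L = []
  · subst hL; simpa using key 1 (by simp)
  · rw [Kk_append hL (by simp [hB]), Kk_append hL (by simp [hB'])]
    apply int_lt ((Kk_cont2 _ _).mul (Kk_cont1 _ _)) ((Kk_cont2 _ _).mul (Kk_cont1 _ _))
    intro t ht
    exact mul_lt_mul_of_pos_left (key t (Or.inr ⟨hL, ht.1, ht.2⟩))
      (Kk_pos hL hL2 one_pos ht.1)

theorem polyint (a b c0 c1 c2 c3 c4 c5 c6 : ℝ) :
    ∫ t in a..b, (c0 + c1 * t + c2 * t ^ 2 + c3 * t ^ 3 + c4 * t ^ 4 + c5 * t ^ 5 + c6 * t ^ 6) =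
      c0 * (b - a) + c1 * (b ^ 2 - a ^ 2) / 2 + c2 * (b ^ 3 - a ^ 3) / 3 +
      c3 * (b ^ 4 - a ^ 4) / 4 + c4 * (b ^ 5 - a ^ 5) / 5 + c5 * (b ^ 6 - a ^ 6) / 6 +
      c6 * (b ^ 7 - a ^ 7) / 7 := by
  have key : ∀ t ∈ Set.uIcc a b, HasDerivAt (fun t : ℝ => c0 * t + c1 * (t ^ 2 / 2) +
      c2 * (t ^ 3 / 3) + c3 * (t ^ 4 / 4) + c4 * (t ^ 5 / 5) + c5 * (t ^ 6 / 6) +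
      c6 * (t ^ 7 / 7))
      (c0 + c1 * t + c2 * t ^ 2 + c3 * t ^ 3 + c4 * t ^ 4 + c5 * t ^ 5 + c6 * t ^ 6) t := by
    intro t _
    have hp : ∀ (c : ℝ) (n : ℕ), HasDerivAt (fun t : ℝ => c * (t ^ (n + 1) / ((n + 1 : ℕ) : ℝ)))
        (c * t ^ n) t := by
      intro c n
      have := ((hasDerivAt_pow (n + 1) t).div_const ((n + 1 : ℕ) : ℝ)).const_mul c
      refine this.congr_deriv ?_
      have : ((n + 1 : ℕ) : ℝ) ≠ 0 := by positivity
      rw [Nat.add_sub_cancel, mul_div_right_comm, div_self this, one_mul]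
    have h0 := (hasDerivAt_id t).const_mul c0
    have := ((((((h0.add (hp c1 1)).add (hp c2 2)).add (hp c3 3)).add (hp c4 4)).add
      (hp c5 5)).add (hp c6 6))
    refine (this.congr_deriv (by ring)).congr_of_eventuallyEq (Filter.Eventually.of_forall ?_)
    intro t
    simp only [Pi.add_apply, id]
    norm_num
  rw [intervalIntegral.integral_eq_sub_of_hasDerivAt key
    (Continuous.intervalIntegrable (by fun_prop) _ _)]
  ring

/-- Integrate a function which is polynomial. -/
theorem polyint' {f : ℝ → ℝ} {a b : ℝ} (hab : a ≤ b) (c0 c1 c2 c3 c4 c5 c6 : ℝ)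
    (hf : ∀ t, a ≤ t → t ≤ b →
      f t = c0 + c1 * t + c2 * t ^ 2 + c3 * t ^ 3 + c4 * t ^ 4 + c5 * t ^ 5 + c6 * t ^ 6) :
    ∫ t in a..b, f t =
      c0 * (b - a) + c1 * (b ^ 2 - a ^ 2) / 2 + c2 * (b ^ 3 - a ^ 3) / 3 +
      c3 * (b ^ 4 - a ^ 4) / 4 + c4 * (b ^ 5 - a ^ 5) / 5 + c5 * (b ^ 6 - a ^ 6) / 6 +
      c6 * (b ^ 7 - a ^ 7) / 7 := by
  rw [← polyint]
  apply intervalIntegral.integral_congr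
  intro t ht
  rw [Set.uIcc_of_le hab] at ht
  exact hf t ht.1 ht.2

theorem int_split {f : ℝ → ℝ} (hf : Continuous f) (s : ℝ) :
    ∫ t in (0:ℝ)..1, f t = (∫ t in (0:ℝ)..s, f t) + ∫ t in s..1, f t :=
  (intervalIntegral.integral_add_adjacent_intervals (hf.intervalIntegrable _ _)
    (hf.intervalIntegrable _ _)).symm

theorem WK_cont (a : ℕ) (l : List ℕ) (x y : ℝ) : Continuous (fun t => Wk a x t * Kk l t y) :=
  (Wk_cont2 a x).mul (Kk_cont1 l y)

theorem tK_cont (l : List ℕ) (y : ℝ) : Continuous (fun t => t * Kk l t y) :=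
  continuous_id'.mul (Kk_cont1 l y)

theorem Wk_two (x y : ℝ) : Wk 2 x y = min x y := by
  unfold Wk
  rcases le_total x y with h | h
  · rw [abs_of_nonpos (by linarith), min_eq_left h]; norm_num; ring
  · rw [abs_of_nonneg (by linarith), min_eq_right h]; norm_num

theorem Wk_three (x y : ℝ) : Wk 3 x y = x * y := by
  unfold Wk
  norm_num [Nat.factorial]; ring

theorem Wk_four {x y : ℝ} (h : y ≤ x) : Wk 4 x y = (3 * x ^ 2 * y + y ^ 3) / 6 := by
  unfold Wk
  rw [abs_of_nonneg (by linarith)]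
  norm_num [Nat.factorial]; ring

theorem Wk_four' {x y : ℝ} (h : x ≤ y) : Wk 4 x y = (3 * y ^ 2 * x + x ^ 3) / 6 := by
  rw [Wk_symm, Wk_four h]

theorem Wk_five (x y : ℝ) : Wk 5 x y = x * y * (x ^ 2 + y ^ 2) / 6 := by
  unfold Wk
  have : |x - y| ^ 4 = (x - y) ^ 4 := by
    rw [show (4:ℕ) = 2 * 2 from rfl, pow_mul, sq_abs, pow_mul]
  norm_num [Nat.factorial, this]; ring

theorem Wk_four_le {x t : ℝ} (hx : 0 ≤ x) (hx1 : x ≤ 1) (ht : 0 ≤ t) (ht1 : t ≤ 1) :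
    Wk 4 x t ≤ x * ((3 * t + t ^ 3) / 6) := by
  rcases le_total t x with h | h
  · rw [Wk_four h]
    have : 0 ≤ t * (1 - x) * (3 * x - t ^ 2) :=
      mul_nonneg (mul_nonneg ht (by linarith)) (by nlinarith)
    nlinarith
  · rw [Wk_four' h]
    have h1 : 0 ≤ x * t * (1 - t) * (3 - t) :=
      mul_nonneg (mul_nonneg (mul_nonneg hx ht) (by linarith)) (by linarith)
    have h2 : 0 ≤ x * (t ^ 2 - x ^ 2) := mul_nonneg hx (by nlinarith)
    nlinarith

theorem Kk_three {l : List ℕ} (hl : l ≠ []) (x y : ℝ) :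
    Kk (3 :: l) x y = x * ∫ t in (0:ℝ)..1, t * Kk l t y := by
  rw [Kk_cons 3 hl, ← intervalIntegral.integral_const_mul]
  simp only [Wk_three, mul_assoc]

theorem Kk_two {l : List ℕ} (hl : l ≠ []) {x y : ℝ} (hx : 0 ≤ x) (hx1 : x ≤ 1) :
    Kk (2 :: l) x y = (∫ t in (0:ℝ)..x, t * Kk l t y) + ∫ t in x..1, x * Kk l t y := by
  rw [Kk_cons 2 hl, int_split (WK_cont 2 l x y) x]
  congr 1
  · apply intervalIntegral.integral_congr
    intro t ht
    rw [Set.uIcc_of_le hx] at ht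
    simp only [Wk_two, min_eq_right ht.2]
  · apply intervalIntegral.integral_congr
    intro t ht
    rw [Set.uIcc_of_le hx1] at ht
    simp only [Wk_two, min_eq_left ht.1]

theorem K1 (a : ℕ) (x y : ℝ) : Kk [a] x y = Wk a x y := rfl

theorem K33 (x y : ℝ) : Kk [3, 3] x y = x * y / 3 := by
  rw [Kk_three (by simp), polyint' zero_le_one 0 0 y 0 0 0 0]
  · ring
  · intro t _ _; rw [K1, Wk_three]; ring

theorem K23 {x : ℝ} (y : ℝ) (hx : 0 ≤ x) (hx1 : x ≤ 1) :
    Kk [2, 3] x y = y * (x / 2 - x ^ 3 / 6) := by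
  rw [Kk_two (by simp) hx hx1, polyint' hx 0 0 y 0 0 0 0, polyint' hx1 0 (x * y) 0 0 0 0 0]
  · ring
  · intro t _ _; rw [K1, Wk_three]; ring
  · intro t _ _; rw [K1, Wk_three]; ring

theorem K32 (x : ℝ) {y : ℝ} (hy : 0 ≤ y) (hy1 : y ≤ 1) :
    Kk [3, 2] x y = x * (y / 2 - y ^ 3 / 6) := by
  rw [Kk_three (by simp), int_split (tK_cont _ _) y,
    polyint' hy 0 0 1 0 0 0 0, polyint' hy1 0 y 0 0 0 0 0]
  · ring
  · intro t h1 h2; rw [K1, Wk_two, min_eq_right h1]; ring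
  · intro t h1 h2; rw [K1, Wk_two, min_eq_left h2]; ring

theorem ineq_5 {x y : ℝ} (hx : 0 < x) (hx1 : x ≤ 1) (hy : 0 < y) (hy1 : y ≤ 1)
    (h : x < 1 ∨ y < 1) : Kk [5] x y < Kk [3, 2] x y := by
  rw [K32 x hy.le hy1, K1, Wk_five]
  have hp : 0 < x * y := mul_pos hx hy
  have : x ^ 2 + y ^ 2 + y ^ 2 < 3 := by
    rcases h with h | h <;> nlinarith
  have := mul_lt_mul_of_pos_left this hp
  nlinarith

theorem ineq_start23 {y : ℝ} (hy : 0 < y) (hy1 : y < 1) : Kk [2, 3] 1 y < Kk [3, 2] 1 y := by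
  rw [K32 1 hy.le hy1.le, K23 y zero_le_one le_rfl]
  have : 0 < y * (1 - y ^ 2) := mul_pos hy (by nlinarith)
  nlinarith

theorem ineq_end32 {x : ℝ} (hx : 0 < x) (hx1 : x < 1) : Kk [3, 2] x 1 < Kk [2, 3] x 1 := by
  rw [K32 x zero_le_one le_rfl, K23 1 hx.le hx1.le]
  have : 0 < x * (1 - x ^ 2) := mul_pos hx (by nlinarith)
  nlinarith

theorem K22 {s y : ℝ} (hs : 0 ≤ s) (hsy : s ≤ y) (hy1 : y ≤ 1) :
    Kk [2, 2] s y = s * y - s * y ^ 2 / 2 - s ^ 3 / 6 := by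
  have hc := WK_cont 2 [2] s y
  rw [Kk_cons 2 (by simp), int_split hc s, ← intervalIntegral.integral_add_adjacent_intervals
    (hc.intervalIntegrable s y) (hc.intervalIntegrable y 1),
    polyint' hs 0 0 1 0 0 0 0, polyint' hsy 0 s 0 0 0 0 0, polyint' hy1 (s * y) 0 0 0 0 0 0]
  · ring
  · intro t h1 h2; rw [K1, Wk_two, Wk_two, min_eq_left (by linarith), min_eq_right h1]; ring
  · intro t h1 h2; rw [K1, Wk_two, Wk_two, min_eq_left h1, min_eq_left h2]; ring
  · intro t h1 h2; rw [K1, Wk_two, Wk_two, min_eq_right h2, min_eq_left (by linarith)]; ring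

theorem K22' {s y : ℝ} (hy : 0 ≤ y) (hsy : y ≤ s) (hs1 : s ≤ 1) :
    Kk [2, 2] s y = s * y - y * s ^ 2 / 2 - y ^ 3 / 6 := by
  have hc := WK_cont 2 [2] s y
  rw [Kk_cons 2 (by simp), int_split hc y, ← intervalIntegral.integral_add_adjacent_intervals
    (hc.intervalIntegrable y s) (hc.intervalIntegrable s 1),
    polyint' hy 0 0 1 0 0 0 0, polyint' hsy 0 y 0 0 0 0 0, polyint' hs1 (s * y) 0 0 0 0 0 0]
  · ring
  · intro t h1 h2; rw [K1, Wk_two, Wk_two, min_eq_left h1, min_eq_right (by linarith)]; ring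
  · intro t h1 h2; rw [K1, Wk_two, Wk_two, min_eq_right h2, min_eq_right h1]; ring
  · intro t h1 h2; rw [K1, Wk_two, Wk_two, min_eq_right (by linarith), min_eq_left h2]; ring

theorem ineq_start22 {y : ℝ} (hy : 0 < y) (hy1 : y ≤ 1) : Kk [2, 2] 1 y < Kk [4] 1 y := by
  rw [K1, Wk_four hy1, K22' hy.le hy1 le_rfl]
  have : 0 < y ^ 3 := by positivity
  nlinarith

theorem ineq_end22 {x : ℝ} (hx : 0 < x) (hx1 : x ≤ 1) : Kk [2, 2] x 1 < Kk [4] x 1 := by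
  rw [K1, Wk_four' hx1, K22 hx.le hx1 le_rfl]
  have : 0 < x ^ 3 := by positivity
  nlinarith

theorem ineq_44 {x y : ℝ} (hx : 0 < x) (hx1 : x ≤ 1) (hy : 0 < y) (hy1 : y ≤ 1) :
    Kk [4, 4] x y < Kk [3, 2, 3] x y := by
  have h1 : Kk [3, 2, 3] x y = x * y * (2 / 15) := by
    rw [Kk_three (by simp), polyint' zero_le_one 0 0 (y / 2) 0 (- y / 6) 0 0]
    · ring
    · intro t h1 h2; rw [K23 y h1 h2]; ring
  have h2 : Kk [4, 4] x y ≤ x * y * (152 / 35 / 36) := by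
    rw [Kk_cons 4 (by simp)]
    have : ∫ t in (0:ℝ)..1, (x * ((3 * t + t ^ 3) / 6)) * (y * ((3 * t + t ^ 3) / 6)) =
        x * y * (152 / 35 / 36) := by
      rw [polyint' zero_le_one 0 0 (x * y / 4) 0 (x * y / 6) 0 (x * y / 36)]
      · ring
      · intro t _ _; ring
    rw [← this]
    apply int_le (WK_cont _ _ _ _) (by fun_prop)
    intro t ht
    rw [K1, Wk_symm 4 t y]
    exact mul_le_mul (Wk_four_le hx.le hx1 ht.1 ht.2) (Wk_four_le hy.le hy1 ht.1 ht.2)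
      (Wk_nonneg hy.le ht.1) (by have := ht.1; positivity)
  rw [h1]
  have := mul_pos hx hy
  nlinarith

theorem ineq_24 {x y : ℝ} (hx : 0 < x) (hy : 0 < y) (hy1 : y ≤ 1) :
    Kk [2, 4] x y < Kk [3, 3] x y := by
  have h2 : Kk [2, 4] x y ≤ x * y * (7 / 24) := by
    rw [Kk_cons 2 (by simp)]
    have : ∫ t in (0:ℝ)..1, x * (y * ((3 * t + t ^ 3) / 6)) = x * y * (7 / 24) := by
      rw [polyint' zero_le_one 0 (x * y / 2) 0 (x * y / 6) 0 0 0]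
      · ring
      · intro t _ _; ring
    rw [← this]
    apply int_le (WK_cont _ _ _ _) (by fun_prop)
    intro t ht
    rw [K1, Wk_symm 4 t y, Wk_two]
    exact mul_le_mul (min_le_left _ _) (Wk_four_le hy.le hy1 ht.1 ht.2)
      (Wk_nonneg hy.le ht.1) hx.le
  rw [K33]
  have := mul_pos hx hy
  nlinarith

theorem ineq_42 {x y : ℝ} (hx : 0 < x) (hx1 : x ≤ 1) (hy : 0 < y) :
    Kk [4, 2] x y < Kk [3, 3] x y := by
  have h2 : Kk [4, 2] x y ≤ x * y * (7 / 24) := by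
    rw [Kk_cons 4 (by simp)]
    have : ∫ t in (0:ℝ)..1, (x * ((3 * t + t ^ 3) / 6)) * y = x * y * (7 / 24) := by
      rw [polyint' zero_le_one 0 (x * y / 2) 0 (x * y / 6) 0 0 0]
      · ring
      · intro t _ _; ring
    rw [← this]
    apply int_le (WK_cont _ _ _ _) (by fun_prop)
    intro t ht
    rw [K1, Wk_two]
    exact mul_le_mul (Wk_four_le hx.le hx1 ht.1 ht.2) (min_le_right _ _)
      (le_min ht.1 hy.le) (by have := ht.1; positivity)
  rw [K33]
  have := mul_pos hx hy
  nlinarith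

theorem ineq_222 {x y : ℝ} (hx : 0 < x) (hy : 0 < y) (hy1 : y ≤ 1) :
    Kk [2, 2, 2] x y < Kk [3, 3] x y := by
  have h1 : ∀ s, 0 < s → s ≤ 1 → Kk [2, 2] s y < y * (s - s ^ 2 / 2) := by
    intro s hs hs1
    rcases le_total s y with h | h
    · rw [K22 hs.le h hy1]
      have h2 : 0 < s ^ 3 := by positivity
      have h3 : 0 ≤ s * y * (y - s) := mul_nonneg (by positivity) (by linarith)
      nlinarith
    · rw [K22' hy.le h hs1]
      have h2 : 0 < y ^ 3 := by positivity
      nlinarith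
  have : ∫ t in (0:ℝ)..1, x * (y * (t - t ^ 2 / 2)) = x * y / 3 := by
    rw [polyint' zero_le_one 0 (x * y) (- x * y / 2) 0 0 0 0]
    · ring
    · intro t _ _; ring
  rw [K33, ← this, Kk_cons 2 (by simp)]
  apply int_lt (WK_cont _ _ _ _) (by fun_prop)
  intro t ht
  rw [Wk_two]
  have h2 := h1 t ht.1 ht.2.le
  have h3 : 0 < Kk [2, 2] t y := Kk_pos (by simp) (by simp) ht.1 hy
  calc _ ≤ x * Kk [2, 2] t y := mul_le_mul_of_nonneg_right (min_le_left _ _) h3.le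
    _ < _ := mul_lt_mul_of_pos_left h2 hx

theorem K343 (x y : ℝ) : Kk [3, 4, 3] x y = x * y * (2 / 35) := by
  have h2 : ∀ s, 0 ≤ s → s ≤ 1 →
      Kk [4, 3] s y = y * (s / 8 + s ^ 3 / 12 - s ^ 5 / 120) := by
    intro s hs hs1
    rw [Kk_cons 4 (by simp), int_split (WK_cont _ _ _ _) s,
      polyint' hs 0 0 (y * s ^ 2 / 2) 0 (y / 6) 0 0,
      polyint' hs1 0 (y * s ^ 3 / 6) 0 (s * y / 2) 0 0 0]
    · ring
    · intro t h1 h2; rw [K1, Wk_four' h1, Wk_three]; ring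
    · intro t h1 h2; rw [K1, Wk_four h2, Wk_three]; ring
  rw [Kk_three (by simp), polyint' zero_le_one 0 0 (y / 8) 0 (y / 12) 0 (- y / 120)]
  · ring
  · intro t ha hb; rw [h2 t ha hb]; ring

theorem ineq_3223 {x y : ℝ} (hx : 0 < x) (hy : 0 < y) :
    Kk [3, 2, 2, 3] x y < Kk [3, 4, 3] x y := by
  have h1 : ∀ s, 0 ≤ s → s ≤ 1 →
      Kk [2, 2, 3] s y = y * (5 * s / 24 - s ^ 3 / 12 + s ^ 5 / 120) := by
    intro s hs hs1
    rw [Kk_two (by simp) hs hs1, polyint' hs 0 0 (y / 2) 0 (-y / 6) 0 0,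
      polyint' hs1 0 (s * y / 2) 0 (- s * y / 6) 0 0 0]
    · ring
    · intro t h1 h2; rw [K23 y (by linarith) (by linarith)]; ring
    · intro t h1 h2; rw [K23 y (by linarith) (by linarith)]; ring
  have h3 : Kk [3, 2, 2, 3] x y = x * y * (5 / 72 - 1 / 60 + 1 / 840) := by
    rw [Kk_three (by simp), polyint' zero_le_one 0 0 (5 * y / 24) 0 (- y / 12) 0 (y / 120)]
    · ring
    · intro t ha hb; rw [h1 t ha hb]; ring
  rw [h3, K343]
  have := mul_pos hx hy
  nlinarith

theorem ineq_end343 {x : ℝ} (hx : 0 < x) : Kk [3, 4, 3] x 1 < Kk [3, 3, 4] x 1 := by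
  rw [K343, Kk_three (by simp), polyint' zero_le_one 0 0 (1 / 5) 0 0 0 0]
  · linarith
  · intro t _ _
    rw [Kk_three (by simp), polyint' zero_le_one 0 0 (1 / 2) 0 (1 / 6) 0 0]
    · ring
    · intro s _ hs
      rw [K1, Wk_four' hs]; ring

theorem D_upper {x y : ℝ} (hx : 0 ≤ x) (hx1 : x ≤ 1) (hy : 0 ≤ y) (hy1 : y ≤ 1) (n : ℕ) :
    (x + y) ^ (n + 2) - |x - y| ^ (n + 2) ≤ x * y * 2 ^ (n + 2) := by
  set s := x + y with hs
  set d := |x - y| with hd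
  have hd0 : 0 ≤ d := abs_nonneg _
  have hds : d ≤ s := by rw [hd, hs, abs_le]; constructor <;> linarith
  have hds2 : d ≤ 2 - s := by rw [hd, hs, abs_le]; constructor <;> linarith
  induction n with
  | zero =>
    rw [hd, sq_abs, hs]; norm_num; nlinarith
  | succ n ih =>
    have h1 : d ^ (n + 1) ≤ s ^ (n + 1) := pow_le_pow_left₀ hd0 hds _
    have h2 : d * (2 - d) ≤ s * (2 - s) := by nlinarith
    have h3 : d ^ (n + 1) * (d * (2 - d)) ≤ s ^ (n + 1) * (s * (2 - s)) :=
      mul_le_mul h1 h2 (mul_nonneg hd0 (by linarith)) (by positivity)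
    have e1 : d ^ (n + 1) * (d * (2 - d)) = 2 * d ^ (n + 2) - d ^ (n + 1 + 2) := by ring
    have e2 : s ^ (n + 1) * (s * (2 - s)) = 2 * s ^ (n + 2) - s ^ (n + 1 + 2) := by ring
    have e3 : x * y * 2 ^ (n + 1 + 2) = 2 * (x * y * 2 ^ (n + 2)) := by ring
    linarith

theorem D_lower_aux {x y : ℝ} (hy : 0 ≤ y) (hxy : y ≤ x) (n : ℕ) :
    2 * x ^ n ≤ (x + y) ^ n + (x - y) ^ n ∧
    2 * (n + 1 : ℝ) * x ^ n * y ≤ (x + y) ^ (n + 1) - (x - y) ^ (n + 1) := by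
  have hx : 0 ≤ x := hy.trans hxy
  induction n with
  | zero => norm_num; linarith
  | succ n ih =>
    obtain ⟨h1, h2⟩ := ih
    have h0 : 0 ≤ (x + y) ^ (n + 1) - (x - y) ^ (n + 1) := by
      refine le_trans ?_ h2; positivity
    have h3 : (x + y) ^ (n + 1) + (x - y) ^ (n + 1) =
        x * ((x + y) ^ n + (x - y) ^ n) + y * ((x + y) ^ n - (x - y) ^ n) := by ring
    have h00 : 0 ≤ (x + y) ^ n - (x - y) ^ n :=
      sub_nonneg.2 (pow_le_pow_left₀ (by linarith) (by linarith) n)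
    have h4 : 2 * x ^ (n + 1) ≤ (x + y) ^ (n + 1) + (x - y) ^ (n + 1) := by
      rw [h3]
      have := mul_le_mul_of_nonneg_left h1 hx
      have := mul_nonneg hy h00
      have e : x * (2 * x ^ n) = 2 * x ^ (n + 1) := by ring
      linarith
    refine ⟨h4, ?_⟩
    have h5 : (x + y) ^ (n + 1 + 1) - (x - y) ^ (n + 1 + 1) =
        x * ((x + y) ^ (n + 1) - (x - y) ^ (n + 1)) +
        y * ((x + y) ^ (n + 1) + (x - y) ^ (n + 1)) := by ring
    rw [h5]
    have h6 := mul_le_mul_of_nonneg_left h2 hx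
    have h7 := mul_le_mul_of_nonneg_left h4 hy
    push_cast
    calc _ = x * (2 * (n + 1 : ℝ) * x ^ n * y) + y * (2 * x ^ (n + 1)) := by ring
      _ ≤ _ := add_le_add h6 h7

theorem D_lower {x y : ℝ} (hx : 0 ≤ x) (hy : 0 ≤ y) (n : ℕ) :
    2 * (n + 2 : ℝ) * (x * y) * x ^ n ≤ (x + y) ^ (n + 2) - |x - y| ^ (n + 2) := by
  rcases le_total y x with h | h
  · rw [abs_of_nonneg (by linarith)]
    have := (D_lower_aux hy h (n + 1)).2
    push_cast at this
    calc _ = 2 * ((n : ℝ) + 1 + 1) * x ^ (n + 1) * y := by ring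
      _ ≤ _ := this
  · rw [abs_of_nonpos (by linarith), neg_sub, add_comm x y]
    have := (D_lower_aux hx h (n + 1)).2
    push_cast at this
    have h2 : x ^ n ≤ y ^ n := pow_le_pow_left₀ hx h n
    calc _ ≤ 2 * (n + 2 : ℝ) * (x * y) * y ^ n := by gcongr
      _ = 2 * ((n : ℝ) + 1 + 1) * y ^ (n + 1) * x := by ring
      _ ≤ _ := this

theorem Wk_lower {x t : ℝ} (hx : 0 ≤ x) (ht : 0 ≤ t) (p : ℕ) :
    x * t ^ (p + 1) / ((p + 1).factorial : ℝ) ≤ Wk (p + 3) x t := by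
  unfold Wk
  have := D_lower ht hx p
  rw [show p + 3 - 1 = p + 2 from rfl, add_comm x t, abs_sub_comm,
    Nat.factorial_succ (p + 1), div_le_div_iff₀ (by positivity) (by positivity)]
  push_cast
  have hf : (0:ℝ) < ((p + 1).factorial : ℝ) := by positivity
  calc _ = (2 * (p + 2 : ℝ) * (t * x) * t ^ p) * ((p + 1).factorial : ℝ) := by ring
    _ ≤ _ := by gcongr

theorem Wk_upper {x y : ℝ} (hx : 0 ≤ x) (hx1 : x ≤ 1) (hy : 0 ≤ y) (hy1 : y ≤ 1) (n : ℕ) :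
    Wk (n + 3) x y ≤ x * y * (2 ^ (n + 1) / ((n + 2).factorial : ℝ)) := by
  unfold Wk
  rw [show n + 3 - 1 = n + 2 from rfl, ← mul_div_assoc,
    div_le_div_iff₀ (by positivity) (by positivity)]
  have := D_upper hx hx1 hy hy1 n
  have hf : (0:ℝ) < ((n + 2).factorial : ℝ) := by positivity
  calc _ ≤ (x * y * 2 ^ (n + 2)) * ((n + 2).factorial : ℝ) := by gcongr
    _ = _ := by ring

theorem num_ineq (p q : ℕ) (h : (p + q) / 2 = p) :
    (2 ^ (p + q + 2) : ℝ) / ((p + q + 3).factorial : ℝ) <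
      1 / ((p.factorial : ℝ) * (q.factorial : ℝ) * ((p + q + 1 : ℕ) : ℝ)) := by
  rw [div_lt_div_iff₀ (by positivity) (by positivity)]
  have h1 : 2 ^ (p + q) ≤ (p + q + 1) * (p + q).choose p := by
    rw [← Nat.sum_range_choose, ← smul_eq_mul]
    have := Finset.sum_le_card_nsmul (Finset.range (p + q + 1)) (fun i => (p + q).choose i)
      ((p + q).choose p) (fun i _ => by
        have := Nat.choose_le_middle i (p + q); rwa [h] at this)
    simpa using this
  have h2 : (p + q).choose p * p.factorial * q.factorial = (p + q).factorial := by
    have := Nat.choose_mul_factorial_mul_factorial (Nat.le_add_right p q)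
    rwa [Nat.add_sub_cancel_left] at this
  have h3 : (p + q + 3).factorial = (p + q + 3) * (p + q + 2) * (p + q + 1) * (p + q).factorial := by
    rw [Nat.factorial_succ, Nat.factorial_succ, Nat.factorial_succ]; ring
  rw [h3, ← h2, one_mul]
  norm_cast
  have hP : 0 < p.factorial * q.factorial * (p + q + 1) := by positivity
  have hC : 0 < (p + q).choose p := Nat.choose_pos (by omega)
  have h4 : 2 ^ (p + q + 2) < (p + q + 3) * (p + q + 2) * (p + q).choose p := by
    have : 2 ^ (p + q + 2) = 4 * 2 ^ (p + q) := by ring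
    rw [this]
    calc 4 * 2 ^ (p + q) ≤ 4 * ((p + q + 1) * (p + q).choose p) := Nat.mul_le_mul_left _ h1
      _ = (4 * (p + q + 1)) * (p + q).choose p := by ring
      _ < _ := Nat.mul_lt_mul_of_pos_right (by nlinarith) hC
  calc _ < ((p + q + 3) * (p + q + 2) * (p + q).choose p) *
        (p.factorial * q.factorial * (p + q + 1)) := Nat.mul_lt_mul_of_pos_right h4 hP
    _ = _ := by ring

theorem ineq_big (a : ℕ) (ha : 6 ≤ a) : ∃ b e : ℕ, 2 ≤ b ∧ 2 ≤ e ∧ b + e = a ∧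
    ∀ x y : ℝ, 0 < x → x ≤ 1 → 0 < y → y ≤ 1 → Kk [a] x y < Kk [b, e] x y := by
  obtain ⟨p, q, hpq, hm⟩ : ∃ p q : ℕ, a = (p + 1) + (q + 1) + 4 ∧ ((p + 1) + (q + 1)) / 2 = p + 1 := by
    refine ⟨(a - 4) / 2 - 1, (a - 4) - (a - 4) / 2 - 1, ?_, ?_⟩ <;> omega
  refine ⟨p + 3, q + 3, by omega, by omega, by omega, ?_⟩
  intro x y hx hx1 hy hy1
  have hxy := mul_pos hx hy
  have hn := num_ineq (p + 1) (q + 1) hm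
  have hu : Kk [a] x y ≤ _ := Wk_upper (n := p + q + 3) hx.le hx1 hy.le hy1 |>.trans' (by
    rw [K1]; apply le_of_eq; congr 1; omega)
  refine hu.trans_lt (lt_of_lt_of_le (b := x * y * (1 / (((p + 1).factorial : ℝ) *
    ((q + 1).factorial : ℝ) * ((p + 1 + (q + 1) + 1 : ℕ) : ℝ)))) ?_ ?_)
  · apply mul_lt_mul_of_pos_left _ hxy
    rw [show p + q + 3 + 1 = p + 1 + (q + 1) + 2 by ring,
      show p + q + 3 + 2 = p + 1 + (q + 1) + 3 by ring]
    exact hn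
  · rw [Kk_cons _ (by simp)]
    have hI : ∫ t in (0:ℝ)..1, (x * t ^ (p + 1) / ((p + 1).factorial : ℝ)) *
        (y * t ^ (q + 1) / ((q + 1).factorial : ℝ)) = x * y * (1 / (((p + 1).factorial : ℝ) *
    ((q + 1).factorial : ℝ) * ((p + 1 + (q + 1) + 1 : ℕ) : ℝ))) := by
      have : ∀ t : ℝ, (x * t ^ (p + 1) / ((p + 1).factorial : ℝ)) *
        (y * t ^ (q + 1) / ((q + 1).factorial : ℝ)) = (x * y / (((p + 1).factorial : ℝ) *
        ((q + 1).factorial : ℝ))) * t ^ (p + 1 + (q + 1)) := by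
        intro t; rw [pow_add]; field_simp; ring
      simp only [this, intervalIntegral.integral_const_mul, integral_pow]
      push_cast
      simp
      field_simp
    rw [← hI]
    apply int_le (by fun_prop) (WK_cont _ _ _ _)
    intro t ht
    rw [K1, Wk_symm _ t y]
    have := ht.1
    exact mul_le_mul (Wk_lower hx.le ht.1 p) (Wk_lower hy.le ht.1 q) (by positivity)
      (Wk_nonneg hx.le ht.1)

noncomputable def V : ℕ → Bool → (ℕ → Bool) → ℝ → ℝ
  | 0, _, _, _ => 1
  | m + 1, dir, p, x =>
    (if p 0 = true then 0 else ∫ t in x..1, V m true (fun i => p (i + 1)) t) +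
    (if p 0 = dir then ∫ t in (0:ℝ)..x, V m false (fun i => p (i + 1)) t else 0)

theorem V_cont (m : ℕ) : ∀ dir p, Continuous (V m dir p) := by
  induction m with
  | zero => intro dir p; exact continuous_const
  | succ m ih =>
    intro dir p
    have h1 : Continuous fun x : ℝ => ∫ t in x..1, V m true (fun i => p (i + 1)) t := by
      have : (fun x : ℝ => ∫ t in x..1, V m true (fun i => p (i + 1)) t) =
        fun x : ℝ => - ∫ t in (1:ℝ)..x, V m true (fun i => p (i + 1)) t := by
        funext x; rw [integral_symm]
      rw [this]
      exact (continuous_primitive (fun a b => (ih _ _).intervalIntegrable a b) 1).neg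
    have h2 : Continuous fun x : ℝ => ∫ t in (0:ℝ)..x, V m false (fun i => p (i + 1)) t :=
      continuous_primitive (fun a b => (ih _ _).intervalIntegrable a b) 0
    show Continuous fun x => (if p 0 = true then 0 else ∫ t in x..1, V m true (fun i => p (i + 1)) t) +
      (if p 0 = dir then ∫ t in (0:ℝ)..x, V m false (fun i => p (i + 1)) t else 0)
    apply Continuous.add
    · split_ifs
      · exact continuous_const
      · exact h1
    · split_ifs
      · exact h2
      · exact continuous_const

theorem V_nonneg (m : ℕ) : ∀ dir p x, x ∈ Set.Icc (0:ℝ) 1 → 0 ≤ V m dir p x := by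
  induction m with
  | zero => intro dir p x _; exact zero_le_one
  | succ m ih =>
    intro dir p x hx
    unfold V
    apply add_nonneg
    · split_ifs
      · exact le_rfl
      · exact integral_nonneg hx.2 (fun u hu => ih _ _ _ ⟨hx.1.trans hu.1, hu.2⟩)
    · split_ifs
      · exact integral_nonneg hx.1 (fun u hu => ih _ _ _ ⟨hu.1, hu.2.trans hx.2⟩)
      · exact le_rfl

/-- up-phase kernel -/
noncomputable def ak (s : ℕ) (x t : ℝ) : ℝ :=
  if x ≤ t then (t - x) ^ (s - 1) / ((s - 1).factorial : ℝ) else 0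

theorem ak_meas (s : ℕ) : Measurable (fun p : ℝ × ℝ => ak s p.1 p.2) := by
  unfold ak
  apply Measurable.ite
  · exact measurableSet_le measurable_fst measurable_snd
  · exact Continuous.measurable (by fun_prop)
  · exact measurable_const

theorem ak_bdd (s : ℕ) {x t : ℝ} (hx : x ∈ Set.Icc (0:ℝ) 1) (ht : t ∈ Set.Icc (0:ℝ) 1) :
    |ak s x t| ≤ 1 := by
  obtain ⟨hx0, hx1⟩ := hx
  obtain ⟨ht0, ht1⟩ := ht
  unfold ak
  split_ifs with h
  · rw [abs_of_nonneg (div_nonneg (pow_nonneg (by linarith) _) (by positivity))]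
    rw [div_le_one (by positivity)]
    calc (t - x) ^ (s - 1) ≤ 1 := pow_le_one₀ (by linarith) (by linarith)
      _ ≤ _ := by exact_mod_cast Nat.succ_le_of_lt (Nat.factorial_pos _)
  · simp

theorem pow_int (n : ℕ) (c : ℝ) (a b : ℝ) :
    ∫ y in a..b, (c - y) ^ n / (n.factorial : ℝ) =
      ((c - a) ^ (n + 1) - (c - b) ^ (n + 1)) / ((n + 1).factorial : ℝ) := by
  rw [intervalIntegral.integral_div, integral_comp_sub_left (fun u => u ^ n) c, integral_pow, Nat.factorial_succ]
  push_cast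
  field_simp

theorem pow_int' (n : ℕ) (c : ℝ) (a b : ℝ) :
    ∫ y in a..b, (y + c) ^ n / (n.factorial : ℝ) =
      ((b + c) ^ (n + 1) - (a + c) ^ (n + 1)) / ((n + 1).factorial : ℝ) := by
  rw [intervalIntegral.integral_div, integral_comp_add_right (fun u => u ^ n) c, integral_pow, Nat.factorial_succ]
  push_cast
  field_simp

theorem ak_int1 (s : ℕ) {x t : ℝ} (ht1 : t ≤ 1) (hx1 : x ≤ 1) :
    ∫ y in x..1, ak (s + 1) y t = ak (s + 2) x t := by
  have hz : ∀ a b : ℝ, t ≤ a → a ≤ b → ∫ y in a..b, ak (s + 1) y t = 0 := by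
    intro a b hta hab
    rw [integral_zero_ae]
    refine Filter.Eventually.of_forall (fun y hy => ?_)
    rw [Set.uIoc_of_le hab] at hy
    unfold ak
    rw [if_neg (by have := hy.1; linarith)]
  have hp : x ≤ t → Set.EqOn (fun y => ak (s + 1) y t)
      (fun y => (t - y) ^ s / (s.factorial : ℝ)) (Set.uIcc x t) := by
    intro h y hy
    rw [Set.uIcc_of_le h] at hy
    simp only [ak]; rw [if_pos hy.2]; rfl
  by_cases h : x ≤ t
  · rw [← integral_add_adjacent_intervals (b := t), hz t 1 le_rfl ht1, add_zero,
      integral_congr (hp h), pow_int]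
    · unfold ak; rw [if_pos h]; simp
    · have : Continuous (fun y : ℝ => (t - y) ^ s / (s.factorial : ℝ)) := by fun_prop
      exact (this.intervalIntegrable x t).congr (fun y hy => ((hp h) (Set.uIoc_subset_uIcc hy)).symm)
    · refine (intervalIntegrable_const (c := (0:ℝ))).congr (fun y hy => ?_)
      rw [Set.uIoc_of_le ht1] at hy
      simp only [ak]
      rw [if_neg (by have := hy.1; linarith)]
  · rw [hz x 1 (by linarith) hx1]
    unfold ak; rw [if_neg h]

theorem ak_int2 (s : ℕ) {x t : ℝ} (hx : 0 ≤ x) (ht : 0 ≤ t) :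
    ∫ y in (0:ℝ)..x, (Wk (s + 1) y t + ak (s + 1) y t) = Wk (s + 2) x t := by
  have e1 : ∀ y, y ≤ t → Wk (s + 1) y t + ak (s + 1) y t =
      ((y + t) ^ s / (s.factorial : ℝ) + (t - y) ^ s / (s.factorial : ℝ)) / 2 := by
    intro y hy
    unfold Wk ak
    rw [if_pos hy, abs_of_nonpos (by linarith), neg_sub]
    simp only [Nat.add_sub_cancel]
    field_simp; ring
  have e2 : ∀ y, t < y → Wk (s + 1) y t + ak (s + 1) y t =
      ((y + t) ^ s / (s.factorial : ℝ) - (y + (-t)) ^ s / (s.factorial : ℝ)) / 2 := by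
    intro y hy
    unfold Wk ak
    rw [if_neg (by linarith), abs_of_nonneg (by linarith), ← sub_eq_add_neg]
    simp only [Nat.add_sub_cancel, add_zero]
    field_simp
  have c1 : Continuous fun y : ℝ => (y + t) ^ s / (s.factorial : ℝ) := by fun_prop
  have c2 : Continuous fun y : ℝ => (t - y) ^ s / (s.factorial : ℝ) := by fun_prop
  have c3 : Continuous fun y : ℝ => (y + (-t)) ^ s / (s.factorial : ℝ) := by fun_prop
  have i1 : ∀ b, 0 ≤ b → b ≤ t → ∫ y in (0:ℝ)..b, (Wk (s + 1) y t + ak (s + 1) y t) =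
      ((b + t) ^ (s + 1) - (t - b) ^ (s + 1)) / (2 * ((s + 1).factorial : ℝ)) := by
    intro b hb hbt
    have : Set.EqOn (fun y => Wk (s + 1) y t + ak (s + 1) y t) (fun y =>
      ((y + t) ^ s / (s.factorial : ℝ) + (t - y) ^ s / (s.factorial : ℝ)) / 2) (Set.uIcc 0 b) := by
      intro y hy
      rw [Set.uIcc_of_le hb] at hy
      exact e1 y (hy.2.trans hbt)
    rw [integral_congr this, intervalIntegral.integral_div, intervalIntegral.integral_add (c1.intervalIntegrable _ _)
      (c2.intervalIntegrable _ _), pow_int, pow_int']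
    field_simp; ring
  by_cases h : x ≤ t
  · rw [i1 x hx h]
    unfold Wk
    rw [abs_of_nonpos (by linarith), neg_sub]; rfl
  · push Not at h
    have hE : Set.EqOn (fun y =>
      ((y + t) ^ s / (s.factorial : ℝ) - (y + (-t)) ^ s / (s.factorial : ℝ)) / 2)
      (fun y => Wk (s + 1) y t + ak (s + 1) y t) (Set.uIoc t x) := by
      intro y hy
      rw [Set.uIoc_of_le h.le] at hy
      exact (e2 y hy.1).symm
    have hE1 : Set.EqOn (fun y =>
      ((y + t) ^ s / (s.factorial : ℝ) + (t - y) ^ s / (s.factorial : ℝ)) / 2)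
      (fun y => Wk (s + 1) y t + ak (s + 1) y t) (Set.uIoc 0 t) := by
      intro y hy
      rw [Set.uIoc_of_le ht] at hy
      exact (e1 y hy.2).symm
    have i2 : ∫ y in t..x, (Wk (s + 1) y t + ak (s + 1) y t) =
        ((x + t) ^ (s + 1) - (t + t) ^ (s + 1) - (x - t) ^ (s + 1)) / (2 * ((s + 1).factorial : ℝ)) := by
      rw [← intervalIntegral.integral_congr_ae (Filter.Eventually.of_forall hE), intervalIntegral.integral_div, intervalIntegral.integral_sub (c1.intervalIntegrable _ _)
        (c3.intervalIntegrable _ _), pow_int', pow_int']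
      simp only [add_neg_cancel, ← sub_eq_add_neg]
      rw [zero_pow (by omega)]
      field_simp; ring
    rw [← integral_add_adjacent_intervals (b := t), i1 t ht le_rfl, i2]
    · unfold Wk
      rw [abs_of_nonneg (by linarith)]
      simp only [sub_self, Nat.add_sub_cancel, zero_pow (Nat.succ_ne_zero s)]
      have : s + 2 - 1 = s + 1 := rfl
      rw [this]; ring
    · exact (((c1.add c2).div_const 2).intervalIntegrable 0 t).congr hE1
    · exact (((c1.sub c3).div_const 2).intervalIntegrable t x).congr hE

theorem swap_a (s : ℕ) {g : ℝ → ℝ} (hg : Continuous g) {x : ℝ} (hx : x ∈ Set.Icc (0:ℝ) 1) :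
    ∫ y in x..1, (∫ t in (0:ℝ)..1, ak (s + 1) y t * g t) = ∫ t in (0:ℝ)..1, ak (s + 2) x t * g t := by
  obtain ⟨C, hC⟩ := (isCompact_Icc (a := (0:ℝ)) (b := 1)).exists_bound_of_continuousOn hg.continuousOn
  rw [int_swap_bdd (f := fun y t => ak (s + 1) y t * g t) (C := C)
    ((ak_meas (s + 1)).mul (hg.measurable.comp measurable_snd)) hx.1 hx.2 le_rfl]
  · apply intervalIntegral.integral_congr
    intro t ht
    rw [Set.uIcc_of_le zero_le_one] at ht
    simp only [intervalIntegral.integral_mul_const]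
    rw [ak_int1 s ht.2 hx.2]
  · intro y t hy hy1 ht ht1
    rw [abs_mul]
    calc |ak (s + 1) y t| * |g t| ≤ 1 * |g t| := by
          gcongr; exact ak_bdd _ ⟨hy, hy1⟩ ⟨ht, ht1⟩
      _ ≤ C := by rw [one_mul]; exact hC t ⟨ht, ht1⟩

theorem swap_b (s : ℕ) {g : ℝ → ℝ} (hg : Continuous g) {x : ℝ} (hx : x ∈ Set.Icc (0:ℝ) 1) :
    ∫ y in (0:ℝ)..x, (∫ t in (0:ℝ)..1, (Wk (s + 1) y t + ak (s + 1) y t) * g t) =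
      ∫ t in (0:ℝ)..1, Wk (s + 2) x t * g t := by
  obtain ⟨C, hC⟩ := (isCompact_Icc (a := (0:ℝ)) (b := 1)).exists_bound_of_continuousOn hg.continuousOn
  obtain ⟨D, hD⟩ := (isCompact_Icc.prod isCompact_Icc : IsCompact
    (Set.Icc (0:ℝ) 1 ×ˢ Set.Icc (0:ℝ) 1)).exists_bound_of_continuousOn (Wk_cont (s + 1)).continuousOn
  rw [int_swap_bdd (f := fun y t => (Wk (s + 1) y t + ak (s + 1) y t) * g t) (C := (D + 1) * C)
    (((Wk_cont (s + 1)).measurable.add (ak_meas (s + 1))).mul (hg.measurable.comp measurable_snd))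
    le_rfl hx.1 hx.2]
  · apply intervalIntegral.integral_congr
    intro t ht
    rw [Set.uIcc_of_le zero_le_one] at ht
    simp only [intervalIntegral.integral_mul_const]
    rw [ak_int2 s hx.1 ht.1]
  · intro y t hy hy1 ht ht1
    rw [abs_mul]
    have h1 := ak_bdd (s + 1) ⟨hy, hy1⟩ ⟨ht, ht1⟩
    have h2 : |Wk (s + 1) y t| ≤ D := hD (y, t) ⟨⟨hy, hy1⟩, ⟨ht, ht1⟩⟩
    have h3 : |g t| ≤ C := hC t ⟨ht, ht1⟩
    have h4 := (abs_add_le (Wk (s + 1) y t) (ak (s + 1) y t)).trans (add_le_add h2 h1)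
    exact mul_le_mul h4 h3 (abs_nonneg _) ((abs_nonneg _).trans h4)

def pkf (s : ℕ) (q : ℕ → Bool) : ℕ → Bool :=
  fun i => if i < s then false else if i = s then true else q (i - s - 1)

theorem pkf_succ (s : ℕ) (q : ℕ → Bool) : (fun i => pkf (s + 1) q (i + 1)) = pkf s q := by
  funext i
  simp [pkf, Nat.add_sub_add_right]

theorem pkf_zero_succ (q : ℕ → Bool) : (fun i => pkf 0 q (i + 1)) = q := by
  funext i
  simp [pkf]

theorem V_succ (m : ℕ) (dir : Bool) (p : ℕ → Bool) (x : ℝ) : V (m + 1) dir p x =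
    (if p 0 = true then 0 else ∫ t in x..1, V m true (fun i => p (i + 1)) t) +
    (if p 0 = dir then ∫ t in (0:ℝ)..x, V m false (fun i => p (i + 1)) t else 0) := rfl

theorem V_pk0 (k : ℕ) (q : ℕ → Bool) (x : ℝ) :
    V (k + 1) true (pkf 0 q) x = ∫ t in (0:ℝ)..x, V k false q t := by
  rw [V_succ, pkf_zero_succ]
  simp [pkf]

theorem V_pk0' (k : ℕ) (q : ℕ → Bool) (x : ℝ) : V (k + 1) false (pkf 0 q) x = 0 := by
  rw [V_succ]
  simp [pkf]

theorem V_pks (m s : ℕ) (q : ℕ → Bool) (x : ℝ) :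
    V (m + 1) true (pkf (s + 1) q) x = ∫ t in x..1, V m true (pkf s q) t := by
  rw [V_succ, pkf_succ]
  simp [pkf]

theorem V_pks' (m s : ℕ) (q : ℕ → Bool) (x : ℝ) :
    V (m + 1) false (pkf (s + 1) q) x =
      (∫ t in x..1, V m true (pkf s q) t) + ∫ t in (0:ℝ)..x, V m false (pkf s q) t := by
  rw [V_succ, pkf_succ]
  simp [pkf]

theorem ak_one_int {g : ℝ → ℝ} (hg : Continuous g) {x : ℝ} (hx : x ∈ Set.Icc (0:ℝ) 1) :
    ∫ t in x..1, g t = ∫ t in (0:ℝ)..1, ak 1 x t * g t := by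
  have e : ∀ t, ak 1 x t * g t = Set.indicator (Set.Ici x) g t := by
    intro t
    simp [ak, Set.indicator_apply]
  simp only [e]
  rw [intervalIntegral.integral_of_le hx.2, intervalIntegral.integral_of_le zero_le_one,
    MeasureTheory.integral_indicator measurableSet_Ici, Measure.restrict_restrict measurableSet_Ici,
    ← integral_Icc_eq_integral_Ioc]
  by_cases h0 : x = 0
  · subst h0
    rw [integral_Icc_eq_integral_Ioc]
    congr 2
    ext t; simp; intro h _; exact h.le
  · congr 2
    ext t; simp
    intro h _
    exact lt_of_lt_of_le (lt_of_le_of_ne hx.1 (Ne.symm h0)) h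

theorem ak_ii (s : ℕ) {g : ℝ → ℝ} (hg : Continuous g) {x : ℝ} (hx : x ∈ Set.Icc (0:ℝ) 1) :
    IntervalIntegrable (fun t => ak s x t * g t) volume 0 1 := by
  obtain ⟨C, hC⟩ := (isCompact_Icc (a := (0:ℝ)) (b := 1)).exists_bound_of_continuousOn hg.continuousOn
  rw [intervalIntegrable_iff, Set.uIoc_of_le zero_le_one]
  apply Measure.integrableOn_of_bounded (M := C)
  · simp
  · exact (((ak_meas s).comp measurable_prodMk_left).mul hg.measurable).aestronglyMeasurable
  · refine (ae_restrict_iff' measurableSet_Ioc).2 (Filter.Eventually.of_forall fun t ht => ?_)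
    rw [Real.norm_eq_abs, abs_mul]
    have ht' : t ∈ Set.Icc (0:ℝ) 1 := ⟨ht.1.le, ht.2⟩
    calc |ak s x t| * |g t| ≤ 1 * |g t| := by
          gcongr; exact ak_bdd _ hx ht'
      _ ≤ C := by rw [one_mul]; exact hC t ht'

theorem seg (k : ℕ) (q : ℕ → Bool) (s : ℕ) : ∀ x ∈ Set.Icc (0:ℝ) 1,
    V (k + 1 + (s + 1)) true (pkf (s + 1) q) x =
      ∫ t in (0:ℝ)..1, ak (s + 1) x t * V (k + 1) true (pkf 0 q) t ∧
    V (k + 1 + (s + 1)) false (pkf (s + 1) q) x =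
      ∫ t in (0:ℝ)..1, (Wk (s + 1) x t + ak (s + 1) x t) * V (k + 1) true (pkf 0 q) t := by
  have hg : Continuous (V (k + 1) true (pkf 0 q)) := V_cont _ _ _
  induction s with
  | zero =>
    intro x hx
    constructor
    · rw [← add_assoc, V_pks, ak_one_int hg hx]
    · rw [← add_assoc, V_pks']
      simp only [add_zero, V_pk0', zero_add, Wk_one, intervalIntegral.integral_zero]
      exact ak_one_int hg hx
  | succ s ih =>
    intro x hx
    have h1 : ∫ t in x..1, V (k + 1 + (s + 1)) true (pkf (s + 1) q) t =
        ∫ t in (0:ℝ)..1, ak (s + 2) x t * V (k + 1) true (pkf 0 q) t := by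
      rw [← swap_a s hg hx]
      apply intervalIntegral.integral_congr
      intro y hy
      rw [Set.uIcc_of_le hx.2] at hy
      exact (ih y ⟨hx.1.trans hy.1, hy.2⟩).1
    have h2 : ∫ t in (0:ℝ)..x, V (k + 1 + (s + 1)) false (pkf (s + 1) q) t =
        ∫ t in (0:ℝ)..1, Wk (s + 2) x t * V (k + 1) true (pkf 0 q) t := by
      rw [← swap_b s hg hx]
      apply intervalIntegral.integral_congr
      intro y hy
      rw [Set.uIcc_of_le hx.1] at hy
      exact (ih y ⟨hy.1, hy.2.trans hx.2⟩).2
    constructor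
    · rw [← add_assoc (k + 1) (s + 1) 1, V_pks, h1]
    · rw [← add_assoc (k + 1) (s + 1) 1, V_pks', h1, h2]
      simp only [add_mul]
      rw [intervalIntegral.integral_add, add_comm]
      · exact ((Wk_cont2 _ x).mul hg).intervalIntegrable _ _
      · exact ak_ii _ hg hx

theorem seg_int (k : ℕ) (q : ℕ → Bool) (s : ℕ) {x : ℝ} (hx : x ∈ Set.Icc (0:ℝ) 1) :
    ∫ t in (0:ℝ)..x, V (k + 1 + s) false (pkf s q) t =
      ∫ t in (0:ℝ)..1, Wk (s + 1) x t * V (k + 1) true (pkf 0 q) t := by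
  cases s with
  | zero => simp [V_pk0', Wk_one]
  | succ s =>
    rw [← swap_b s (V_cont _ _ _) hx]
    apply intervalIntegral.integral_congr
    intro y hy
    rw [Set.uIcc_of_le hx.1] at hy
    exact (seg k q s y ⟨hy.1, hy.2.trans hx.2⟩).2

theorem seg_end (m : ℕ) : ∀ x ∈ Set.Icc (0:ℝ) 1,
    V m true (fun _ => false) x = ak (m + 1) x 1 ∧
    V m false (fun _ => false) x = Wk (m + 1) x 1 + ak (m + 1) x 1 := by
  induction m with
  | zero =>
    intro x hx
    simp [V, ak, Wk_one, hx.2]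
  | succ m ih =>
    intro x hx
    have h1 : ∫ t in x..1, V m true (fun _ => false) t = ak (m + 2) x 1 := by
      rw [← ak_int1 m le_rfl hx.2]
      apply intervalIntegral.integral_congr
      intro y hy
      rw [Set.uIcc_of_le hx.2] at hy
      exact (ih y ⟨hx.1.trans hy.1, hy.2⟩).1
    have h2 : ∫ t in (0:ℝ)..x, V m false (fun _ => false) t = Wk (m + 2) x 1 := by
      rw [← ak_int2 m hx.1 zero_le_one]
      apply intervalIntegral.integral_congr
      intro y hy
      rw [Set.uIcc_of_le hx.1] at hy
      exact (ih y ⟨hy.1, hy.2.trans hx.2⟩).2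
    rw [V_succ, V_succ, h1, h2]
    refine ⟨by simp, ?_⟩
    rw [if_neg (by simp), if_pos rfl]
    exact add_comm _ _

theorem seg_end_int (m : ℕ) {x : ℝ} (hx : x ∈ Set.Icc (0:ℝ) 1) :
    ∫ t in (0:ℝ)..x, V m false (fun _ => false) t = Wk (m + 2) x 1 := by
  rw [← ak_int2 m hx.1 zero_le_one]
  apply intervalIntegral.integral_congr
  intro y hy
  rw [Set.uIcc_of_le hx.1] at hy
  exact (seg_end m y ⟨hy.1, hy.2.trans hx.2⟩).2

/-- last part plus one -/
def bump : List ℕ → List ℕ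
  | [] => []
  | [a] => [a + 1]
  | a :: b :: l => a :: bump (b :: l)

/-- recursive peak indicator -/
def pcf : List ℕ → ℕ → Bool
  | [] => fun _ => false
  | [_] => fun _ => false
  | a :: b :: l => pkf (a - 1) (pcf (b :: l))

theorem bump_ne {l : List ℕ} (h : l ≠ []) : bump l ≠ [] := by
  match l, h with
  | [a], _ => simp [bump]
  | a :: b :: l, _ => simp [bump]

theorem V_eq_Kk (c : List ℕ) (hc : c ≠ []) (hp : ∀ a ∈ c, 0 < a) {x : ℝ} (hx : x ∈ Set.Icc (0:ℝ) 1) :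
    ∫ t in (0:ℝ)..x, V (c.sum - 1) false (pcf c) t = Kk (bump c) x 1 := by
  induction c generalizing x with
  | nil => exact absurd rfl hc
  | cons a l ih =>
    have ha : 0 < a := hp a (by simp)
    cases l with
    | nil =>
      simp only [pcf, bump, Kk, List.sum_cons, List.sum_nil, add_zero]
      rw [seg_end_int _ hx]
      congr 1; omega
    | cons b l =>
      have hb : 0 < b := hp b (by simp)
      have e : (a :: b :: l).sum - 1 = (b :: l).sum - 1 + 1 + (a - 1) := by
        simp only [List.sum_cons]; omega
      rw [e]
      simp only [pcf, bump]
      rw [seg_int _ _ _ hx, Kk_cons _ (bump_ne (by simp)), Nat.sub_add_cancel ha]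
      apply intervalIntegral.integral_congr
      intro t ht
      rw [Set.uIcc_of_le zero_le_one] at ht
      simp only
      rw [V_pk0, ih (by simp) (fun a ha => hp a (by simp [ha])) ht]

def Mt {α : Type*} [LT α] : (m : ℕ) → Bool → (ℕ → Bool) → α → (Fin m → α) → Prop
  | 0, _, _, _, _ => True
  | m + 1, dir, p, x, y =>
    (x < y 0 ∧ p 0 = false ∧ Mt m true (fun i => p (i + 1)) (y 0) (Fin.tail y)) ∨
    (y 0 < x ∧ p 0 = dir ∧ Mt m false (fun i => p (i + 1)) (y 0) (Fin.tail y))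

noncomputable def nu : Measure ℝ := volume.restrict (Set.Ioc (0:ℝ) 1)

instance nu_prob : IsProbabilityMeasure nu := ⟨by simp [nu]⟩

noncomputable def mu (m : ℕ) : Measure (Fin m → ℝ) := Measure.pi (fun _ => nu)

instance mu_prob (m : ℕ) : IsProbabilityMeasure (mu m) := by unfold mu; infer_instance

theorem tail_meas (m : ℕ) : Measurable (fun y : Fin (m + 1) → ℝ => Fin.tail y) :=
  measurable_pi_iff.2 fun _ => measurable_pi_apply _

theorem Mt_meas (m : ℕ) : ∀ dir p, MeasurableSet {q : ℝ × (Fin m → ℝ) | Mt m dir p q.1 q.2} := by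
  induction m with
  | zero => intro dir p; simp [Mt]
  | succ m ih =>
    intro dir p
    have h0 : Measurable (fun q : ℝ × (Fin (m + 1) → ℝ) => q.2 0) :=
      (measurable_pi_apply 0).comp measurable_snd
    have h1 : Measurable (fun q : ℝ × (Fin (m + 1) → ℝ) => (q.2 0, Fin.tail q.2)) :=
      h0.prodMk ((tail_meas m).comp measurable_snd)
    simp only [Mt]
    refine MeasurableSet.union (MeasurableSet.inter (measurableSet_lt measurable_fst h0)
      (MeasurableSet.inter (MeasurableSet.const _) (h1 (ih _ _)))) (MeasurableSet.inter
      (measurableSet_lt h0 measurable_fst) (MeasurableSet.inter (MeasurableSet.const _) (h1 (ih _ _))))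

theorem pi_split (m : ℕ) {T : Set (ℝ × (Fin m → ℝ))} (hT : MeasurableSet T) :
    mu (m + 1) {y | (y 0, Fin.tail y) ∈ T} = ∫⁻ t, mu m (Prod.mk t ⁻¹' T) ∂nu := by
  have h := measurePreserving_piFinSuccAbove (fun _ : Fin (m + 1) => nu) 0
  have := h.measure_preimage hT.nullMeasurableSet
  rw [Measure.prod_apply hT] at this
  exact this

theorem lint (f : ℝ → ℝ) (hf : Continuous f) (h0 : ∀ x ∈ Set.Icc (0:ℝ) 1, 0 ≤ f x) {a b : ℝ}
    (ha : 0 ≤ a) (hab : a ≤ b) (hb : b ≤ 1) :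
    ∫⁻ t in Set.Ioc a b, ENNReal.ofReal (f t) = ENNReal.ofReal (∫ t in a..b, f t) := by
  rw [intervalIntegral.integral_of_le hab, ofReal_integral_eq_lintegral_ofReal]
  · exact (hf.intervalIntegrable a b).1
  · refine (ae_restrict_iff' measurableSet_Ioc).2 (Filter.Eventually.of_forall fun t ht => ?_)
    exact h0 t ⟨ha.trans ht.1.le, ht.2.trans hb⟩

theorem Mt_measure (m : ℕ) : ∀ dir p, ∀ x ∈ Set.Icc (0:ℝ) 1,
    mu m {y | Mt m dir p x y} = ENNReal.ofReal (V m dir p x) := by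
  induction m with
  | zero => intro dir p x _; simp [Mt, V]
  | succ m ih =>
    intro dir p x hx
    let p' := fun i => p (i + 1)
    let T : Set (ℝ × (Fin m → ℝ)) := {q | (x < q.1 ∧ p 0 = false ∧ Mt m true p' q.1 q.2) ∨
      (q.1 < x ∧ p 0 = dir ∧ Mt m false p' q.1 q.2)}
    have hT : MeasurableSet T :=
      MeasurableSet.union (MeasurableSet.inter (measurableSet_lt measurable_const measurable_fst)
        (MeasurableSet.inter (MeasurableSet.const _) (Mt_meas m _ _))) (MeasurableSet.inter
        (measurableSet_lt measurable_fst measurable_const)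
        (MeasurableSet.inter (MeasurableSet.const _) (Mt_meas m _ _)))
    have h1 := pi_split m hT
    have h2 : {y : Fin (m + 1) → ℝ | Mt (m + 1) dir p x y} = {y : Fin (m + 1) → ℝ | (y 0, Fin.tail y) ∈ T} := rfl
    rw [h2, h1]
    let f1 : ℝ → ℝ := fun t => if p 0 = true then 0 else V m true p' t
    let f2 : ℝ → ℝ := fun t => if p 0 = dir then V m false p' t else 0
    have c1 : Continuous f1 := by
      simp only [f1]; split_ifs
      · exact continuous_const
      · exact V_cont _ _ _
    have c2 : Continuous f2 := by
      simp only [f2]; split_ifs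
      · exact V_cont _ _ _
      · exact continuous_const
    have n1 : ∀ x ∈ Set.Icc (0:ℝ) 1, 0 ≤ f1 x := by
      intro x hx
      simp only [f1]; split_ifs
      · exact le_rfl
      · exact V_nonneg _ _ _ _ hx
    have n2 : ∀ x ∈ Set.Icc (0:ℝ) 1, 0 ≤ f2 x := by
      intro x hx
      simp only [f2]; split_ifs
      · exact V_nonneg _ _ _ _ hx
      · exact le_rfl
    have key : ∀ t ∈ Set.Ioc (0:ℝ) 1, mu m (Prod.mk t ⁻¹' T) =
        (Set.Ioi x).indicator (fun t => ENNReal.ofReal (f1 t)) t +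
        (Set.Iio x).indicator (fun t => ENNReal.ofReal (f2 t)) t := by
      intro t ht
      have ht' : t ∈ Set.Icc (0:ℝ) 1 := ⟨ht.1.le, ht.2⟩
      rcases lt_trichotomy x t with h | h | h
      · rw [Set.indicator_of_mem (by exact h), Set.indicator_of_notMem (by simp [h.le]), add_zero]
        simp only [f1]
        by_cases hp : p 0 = true
        · have : Prod.mk t ⁻¹' T = ∅ := by
            ext y; simp [T, hp, h.le, not_lt.2 h.le]
          rw [this, if_pos hp]; simp
        · have : Prod.mk t ⁻¹' T = {y | Mt m true p' t y} := by
            ext y; simp [T, hp, h, not_lt.2 h.le]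
          rw [this, if_neg hp, ih _ _ _ ht']
      · subst h
        have : Prod.mk x ⁻¹' T = ∅ := by
          ext y; simp [T]
        rw [this]; simp
      · rw [Set.indicator_of_mem (s := Set.Iio x) (by exact h),
          Set.indicator_of_notMem (by simp [h.le]), zero_add]
        simp only [f2]
        by_cases hp : p 0 = dir
        · have : Prod.mk t ⁻¹' T = {y | Mt m false p' t y} := by
            ext y; simp [T, hp, h, not_lt.2 h.le]
          rw [this, if_pos hp, ih _ _ _ ht']
        · have : Prod.mk t ⁻¹' T = ∅ := by
            ext y; simp [T, hp, not_lt.2 h.le]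
          rw [this, if_neg hp]; simp
    unfold nu
    rw [setLIntegral_congr_fun measurableSet_Ioc key, lintegral_add_left
      ((c1.measurable.ennreal_ofReal).indicator measurableSet_Ioi),
      lintegral_indicator measurableSet_Ioi, lintegral_indicator measurableSet_Iio,
      Measure.restrict_restrict measurableSet_Ioi, Measure.restrict_restrict measurableSet_Iio]
    have s1 : Set.Ioi x ∩ Set.Ioc 0 1 = Set.Ioc x 1 := by
      ext t; simp; intro h _; linarith [hx.1]
    have s2 : (volume.restrict (Set.Iio x ∩ Set.Ioc 0 1) : Measure ℝ) =
        volume.restrict (Set.Ioc 0 x) := by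
      rw [show Set.Iio x ∩ Set.Ioc 0 1 = Set.Ioo 0 x by
        ext t; simp
        constructor
        · rintro ⟨a, b, _⟩; exact ⟨b, a⟩
        · rintro ⟨a, b⟩; exact ⟨b, a, by linarith [hx.2]⟩]
      exact Measure.restrict_congr_set Ioo_ae_eq_Ioc
    rw [s1, s2, lint f1 c1 n1 hx.1 hx.2 le_rfl, lint f2 c2 n2 le_rfl hx.1 hx.2, V_succ,
      ← ENNReal.ofReal_add]
    · congr 2
      · simp only [f1]; split_ifs <;> simp [p']
      · simp only [f2]; split_ifs <;> simp [p']
    · exact integral_nonneg hx.2 (fun u hu => n1 u ⟨hx.1.trans hu.1, hu.2⟩)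
    · exact integral_nonneg hx.1 (fun u hu => n2 u ⟨hu.1, hu.2.trans hx.2⟩)

theorem Mt_measure_all (m : ℕ) (p : ℕ → Bool) :
    mu (m + 1) {y | Mt m false p (y 0) (Fin.tail y)} =
      ENNReal.ofReal (∫ t in (0:ℝ)..1, V m false p t) := by
  rw [← lint _ (V_cont _ _ _) (V_nonneg _ _ _) le_rfl zero_le_one le_rfl]
  refine (pi_split m (Mt_meas m false p)).trans ?_
  unfold nu
  refine setLIntegral_congr_fun measurableSet_Ioc (fun t ht => ?_)
  exact Mt_measure m false p t ⟨ht.1.le, ht.2⟩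

theorem Mt_congr {α β : Type*} [LT α] [LT β] (m : ℕ) : ∀ (dir : Bool) (p : ℕ → Bool)
    (z : Fin (m + 1) → α) (w : Fin (m + 1) → β), (∀ i j, z i < z j ↔ w i < w j) →
    (Mt m dir p (z 0) (Fin.tail z) ↔ Mt m dir p (w 0) (Fin.tail w)) := by
  induction m with
  | zero => intro dir p z w _; simp [Mt]
  | succ m ih =>
    intro dir p z w h
    have h' : ∀ i j, Fin.tail z i < Fin.tail z j ↔ Fin.tail w i < Fin.tail w j :=
      fun i j => h i.succ j.succ
    have a := h 0 (Fin.succ 0)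
    have b := h (Fin.succ 0) 0
    have i1 := ih true (fun i => p (i + 1)) _ _ h'
    have i2 := ih false (fun i => p (i + 1)) _ _ h'
    show (z 0 < z (Fin.succ 0) ∧ _ ∧ _) ∨ (z (Fin.succ 0) < z 0 ∧ _ ∧ _) ↔
      (w 0 < w (Fin.succ 0) ∧ _ ∧ _) ∨ (w (Fin.succ 0) < w 0 ∧ _ ∧ _)
    rw [a, b, i1, i2]

theorem Mt_iff (m : ℕ) : ∀ (dir : Bool) (p : ℕ → Bool) (w : ℕ → ℕ), (∀ i < m, w (i + 1) ≠ w i) →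
    (Mt m dir p (w 0) (fun i : Fin m => w (i + 1)) ↔ ∀ i < m,
      (p i = true ↔ ((if i = 0 then dir = true else w (i - 1) < w i) ∧ w (i + 1) < w i))) := by
  induction m with
  | zero => intro dir p w _; simp [Mt]
  | succ m ih =>
    intro dir p w hw
    have hw' : ∀ i < m, w (i + 1 + 1) ≠ w (i + 1) := fun i hi => hw (i + 1) (by omega)
    have hI := fun d => ih d (fun i => p (i + 1)) (fun i => w (i + 1)) hw'
    have hsplit : (∀ i < m + 1,
      (p i = true ↔ ((if i = 0 then dir = true else w (i - 1) < w i) ∧ w (i + 1) < w i))) ↔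
      (p 0 = true ↔ dir = true ∧ w 1 < w 0) ∧ ∀ i < m, (p (i + 1) = true ↔
        (w i < w (i + 1) ∧ w (i + 1 + 1) < w (i + 1))) := by
      constructor
      · intro h
        refine ⟨by simpa using h 0 (by omega), fun i hi => by simpa using h (i + 1) (by omega)⟩
      · rintro ⟨h0, h1⟩ i hi
        cases i with
        | zero => simpa using h0
        | succ i => simpa using h1 i (by omega)
    rw [hsplit]
    have hstep : ∀ d : Bool, (d = true ↔ w 0 < w 1) →
        ((∀ i < m, (p (i + 1) = true ↔ ((if i = 0 then d = true else w (i - 1 + 1) < w (i + 1)) ∧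
          w (i + 1 + 1) < w (i + 1)))) ↔ ∀ i < m, (p (i + 1) = true ↔
        (w i < w (i + 1) ∧ w (i + 1 + 1) < w (i + 1)))) := by
      intro d hd
      refine forall_congr' fun i => forall_congr' fun hi => ?_
      cases i with
      | zero => simp [hd]
      | succ i => simp
    show (w 0 < w 1 ∧ p 0 = false ∧ Mt m true _ (w 1) (fun i : Fin m => w (i + 1 + 1))) ∨
      (w 1 < w 0 ∧ p 0 = dir ∧ Mt m false _ (w 1) (fun i : Fin m => w (i + 1 + 1))) ↔ _
    have e1 : Mt m true (fun i => p (i + 1)) (w 1) (fun i : Fin m => w (i + 1 + 1)) ↔ _ := hI true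
    have e2 : Mt m false (fun i => p (i + 1)) (w 1) (fun i : Fin m => w (i + 1 + 1)) ↔ _ := hI false
    rw [e1, e2]
    have hne := hw 0 (by omega)
    simp only [zero_add] at hne
    rcases lt_or_gt_of_ne hne with h | h
    · rw [hstep false (by simp [h.le])]
      cases hp : p 0 <;> cases dir <;> simp [h, h.le, not_lt.2 h.le]
    · rw [hstep true (by simp [h])]
      cases hp : p 0 <;> cases dir <;> simp [h, h.le, not_lt.2 h.le]

/-- chamber -/
def Ach {n : ℕ} (σ : Equiv.Perm (Fin n)) : Set (Fin n → ℝ) := {z | ∀ i j, z i < z j ↔ σ i < σ j}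

theorem Ach_meas {n : ℕ} (σ : Equiv.Perm (Fin n)) : MeasurableSet (Ach σ) := by
  have : Ach σ = ⋂ i, ⋂ j, {z : Fin n → ℝ | z i < z j ↔ σ i < σ j} := by
    ext z; simp [Ach]
  rw [this]
  refine MeasurableSet.iInter fun i => MeasurableSet.iInter fun j => ?_
  by_cases h : σ i < σ j
  · simp only [h, iff_true]
    exact measurableSet_lt (measurable_pi_apply i) (measurable_pi_apply j)
  · simp only [h, iff_false, not_lt]
    exact measurableSet_le (measurable_pi_apply j) (measurable_pi_apply i)

theorem Ach_measure {n : ℕ} (σ : Equiv.Perm (Fin n)) : mu n (Ach σ) = mu n (Ach 1) := by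
  have h := measurePreserving_piCongrLeft (fun _ : Fin n => nu) σ
  have h2 := h.measure_preimage (Ach_meas (1 : Equiv.Perm (Fin n))).nullMeasurableSet
  rw [show mu n = Measure.pi (fun _ => nu) from rfl, ← h2]
  congr 1
  ext z
  have e : ∀ i, (MeasurableEquiv.piCongrLeft (fun _ : Fin n => ℝ) σ) z (σ i) = z i := by
    intro i
    exact Equiv.piCongrLeft_apply_apply (fun _ : Fin n => ℝ) σ z i
  constructor
  · intro hz i j
    obtain ⟨i, rfl⟩ := σ.surjective i
    obtain ⟨j, rfl⟩ := σ.surjective j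
    rw [e, e]; exact hz i j
  · intro hz i j
    have := hz (σ i) (σ j)
    rwa [e, e] at this

theorem tie_null {n : ℕ} {i j : Fin n} (hij : i ≠ j) : mu n {z | z i = z j} = 0 := by
  have h1 : mu n ≪ (volume : Measure (Fin n → ℝ)) := by
    unfold mu nu
    rw [← Measure.restrict_pi_pi]
    exact Measure.restrict_le_self.absolutelyContinuous
  apply h1
  let f : (Fin n → ℝ) →ₗ[ℝ] ℝ := LinearMap.proj (R := ℝ) (φ := fun _ => ℝ) i - LinearMap.proj (R := ℝ) (φ := fun _ => ℝ) j
  have hs : {z : Fin n → ℝ | z i = z j} = (LinearMap.ker f : Set (Fin n → ℝ)) := by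
    ext z; simp [f, sub_eq_zero]
  rw [hs]
  apply Measure.addHaar_submodule
  intro htop
  have : (Pi.single i 1 : Fin n → ℝ) ∈ LinearMap.ker f := by rw [htop]; trivial
  simp [f, hij] at this

theorem ae_inj (n : ℕ) : ∀ᵐ z ∂(mu n), Function.Injective z := by
  have : ∀ i j : Fin n, ∀ᵐ z ∂(mu n), z i = z j → i = j := by
    intro i j
    by_cases h : i = j
    · exact Filter.Eventually.of_forall fun z _ => h
    · have := tie_null h
      rw [measure_eq_zero_iff_ae_notMem] at this
      filter_upwards [this] with z hz hz'
      exact absurd hz' hz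
  have := ae_all_iff.2 fun i => ae_all_iff.2 (this i)
  filter_upwards [this] with z hz i j hij using hz i j hij

theorem exists_Ach {n : ℕ} {z : Fin n → ℝ} (hz : Function.Injective z) : ∃ σ, z ∈ Ach σ := by
  refine ⟨(Tuple.sort z).symm, fun i j => ?_⟩
  have hm : StrictMono (z ∘ Tuple.sort z) :=
    (Tuple.monotone_sort z).strictMono_of_injective (hz.comp (Tuple.sort z).injective)
  have := hm.lt_iff_lt (a := (Tuple.sort z).symm i) (b := (Tuple.sort z).symm j)
  simpa using this

theorem Ach_disj {n : ℕ} {σ τ : Equiv.Perm (Fin n)} {z : Fin n → ℝ} (h1 : z ∈ Ach σ)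
    (h2 : z ∈ Ach τ) : σ = τ := by
  have h : ∀ i j, σ i < σ j ↔ τ i < τ j := fun i j => (h1 i j).symm.trans (h2 i j)
  have hm : StrictMono (fun k => τ (σ.symm k)) := by
    intro a b hab
    have := (h (σ.symm a) (σ.symm b)).1 (by simpa using hab)
    exact this
  have hs : StrictMono (σ.symm.trans τ) := hm
  have h3 : ∀ k, τ (σ.symm k) = k := by
    intro k
    have hid : (hs.orderIsoOfSurjective _ (σ.symm.trans τ).surjective) = OrderIso.refl (Fin n) :=
      Subsingleton.elim _ _
    have := congrArg (fun e : Fin n ≃o Fin n => e k) hid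
    simpa using this
  ext i
  have := h3 (σ i)
  simp at this
  rw [this]

open Classical in
theorem measure_good (n : ℕ) (Q : Set (Fin n → ℝ)) (G : Equiv.Perm (Fin n) → Prop)
    (hQ : ∀ σ, ∀ z ∈ Ach σ, (z ∈ Q ↔ G σ)) :
    mu n Q = (Nat.card {σ // G σ} : ENNReal) * mu n (Ach 1) := by
  have h1 : Q =ᵐ[mu n] ⋃ σ ∈ Finset.univ.filter G, Ach σ := by
    filter_upwards [ae_inj n] with z hz
    obtain ⟨σ, hσ⟩ := exists_Ach hz
    apply propext
    change z ∈ Q ↔ z ∈ ⋃ σ ∈ Finset.univ.filter G, Ach σ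
    rw [hQ σ z hσ]
    simp only [Finset.mem_filter, Finset.mem_univ, true_and, Set.mem_iUnion, exists_prop]
    constructor
    · intro h; exact ⟨σ, h, hσ⟩
    · rintro ⟨τ, hG, hτ⟩
      rwa [Ach_disj hσ hτ]
  rw [measure_congr h1, measure_biUnion_finset]
  · simp only [Ach_measure, Finset.sum_const, nsmul_eq_mul]
    congr 2
    rw [Nat.card_eq_fintype_card, Fintype.card_subtype]
  · intro σ _ τ _ hne
    refine Set.disjoint_left.2 fun z h1 h2 => hne (Ach_disj h1 h2)
  · exact fun σ _ => Ach_meas σ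

theorem Ach_pos (n : ℕ) : mu n (Ach 1) ≠ 0 := by
  intro h
  have := measure_good n Set.univ (fun _ => True) (by simp)
  rw [h, mul_zero] at this
  simp at this

theorem compPeaks_cons (a b : ℕ) (l : List ℕ) (j : ℕ) :
    j ∈ compPeaks (a :: b :: l) ↔ j = a ∨ (a ≤ j ∧ j - a ∈ compPeaks (b :: l)) := by
  simp only [compPeaks, Finset.mem_image, Finset.mem_range, List.length_cons, Nat.add_sub_cancel]
  constructor
  · rintro ⟨i, hi, rfl⟩
    cases i with
    | zero => left; simp
    | succ i =>
      right
      refine ⟨by simp, i, by omega, by simp⟩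
  · rintro (rfl | ⟨h, i, hi, he⟩)
    · exact ⟨0, by omega, by simp⟩
    · refine ⟨i + 1, by omega, ?_⟩
      rw [List.take_succ_cons, List.sum_cons, he]; omega

theorem compPeaks_range (c : List ℕ) (hp : ∀ a ∈ c, 0 < a) (j : ℕ) (hj : j ∈ compPeaks c) :
    1 ≤ j ∧ j < c.sum := by
  induction c generalizing j with
  | nil => simp [compPeaks] at hj
  | cons a l ih =>
    cases l with
    | nil => simp [compPeaks] at hj
    | cons b l =>
      have ha := hp a (by simp)
      have hb := hp b (by simp)
      rw [compPeaks_cons] at hj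
      rcases hj with rfl | ⟨h1, h2⟩
      · simp; omega
      · have := ih (fun a ha => hp a (by simp [ha])) _ h2
        simp only [List.sum_cons] at *; omega

theorem pcf_iff (c : List ℕ) (hp : ∀ a ∈ c, 0 < a) (i : ℕ) :
    pcf c i = true ↔ i + 1 ∈ compPeaks c := by
  induction c generalizing i with
  | nil => simp [pcf, compPeaks]
  | cons a l ih =>
    cases l with
    | nil => simp [pcf, compPeaks]
    | cons b l =>
      have ha := hp a (by simp)
      have hp' : ∀ a ∈ b :: l, 0 < a := fun a ha => hp a (by simp [ha])
      rw [compPeaks_cons]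
      simp only [pcf, pkf]
      by_cases h1 : i < a - 1
      · rw [if_pos h1]
        simp
        constructor
        · omega
        · intro h; omega
      · rw [if_neg h1]
        by_cases h2 : i = a - 1
        · rw [if_pos h2]; simp; left; omega
        · rw [if_neg h2, ih hp']
          have e : i + 1 - a = i - (a - 1) - 1 + 1 := by omega
          rw [e]
          constructor
          · intro h; exact Or.inr ⟨by omega, h⟩
          · rintro (h | h)
            · omega
            · exact h.2

theorem peak_iff {m : ℕ} (σ : Equiv.Perm (Fin (m + 1))) (c : List ℕ) (hp : ∀ a ∈ c, 0 < a)
    (hs : c.sum = m + 1) :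
    Mt m false (pcf c) ((σ 0 : Fin (m + 1)) : ℕ) (Fin.tail (fun i => ((σ i : Fin (m + 1)) : ℕ))) ↔
      peakSet σ = compPeaks c := by
  let w : ℕ → ℕ := fun i => if h : i < m + 1 then (σ ⟨i, h⟩ : ℕ) else 0
  have hw : ∀ i (h : i < m + 1), w i = σ ⟨i, h⟩ := fun i h => dif_pos h
  have hne : ∀ i < m, w (i + 1) ≠ w i := by
    intro i hi
    rw [hw (i + 1) (by omega), hw i (by omega)]
    intro h
    have := σ.injective (Fin.ext h)
    simp at this
  have e0 : ((σ 0 : Fin (m + 1)) : ℕ) = w 0 := (hw 0 (by omega)).symm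
  have e1 : Fin.tail (fun i => ((σ i : Fin (m + 1)) : ℕ)) = fun i : Fin m => w (i + 1) := by
    funext i
    rw [hw (i + 1) (by omega)]; rfl
  rw [e0, e1, Mt_iff m _ _ _ hne, Finset.ext_iff]
  have hpk : ∀ i, i < m → ((i + 1 ∈ peakSet σ) ↔
      ((if i = 0 then false = true else w (i - 1) < w i) ∧ w (i + 1) < w i)) := by
    intro i hi
    rw [show i + 1 ∈ peakSet σ ↔ i + 1 < m + 1 ∧ IsPeak σ (i + 1) by
      classical simp [peakSet]]
    unfold IsPeak
    cases i with
    | zero => simp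
    | succ i =>
      simp only [Nat.add_eq_zero_iff, one_ne_zero, and_false, if_false, Nat.add_sub_cancel]
      rw [hw i (by omega), hw (i + 1) (by omega), hw (i + 1 + 1) (by omega)]
      constructor
      · rintro ⟨_, h2, h3, h4, h5⟩
        exact ⟨h4, h5⟩
      · rintro ⟨h4, h5⟩
        exact ⟨by omega, by omega, by omega, h4, h5⟩
  constructor
  · intro h j
    cases j with
    | zero =>
      refine iff_of_false ?_ ?_
      · simp [peakSet, IsPeak]
      · intro h; have := compPeaks_range c hp _ h; omega
    | succ i =>
      by_cases hi : i < m
      · rw [hpk i hi, ← h i hi, pcf_iff c hp]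
      · refine iff_of_false ?_ ?_
        · simp [peakSet, IsPeak]; omega
        · intro h; have := compPeaks_range c hp _ h; omega
  · intro h i hi
    rw [← hpk i hi, h, pcf_iff c hp]

theorem bridge (c : List ℕ) (hp : ∀ a ∈ c, 0 < a) (m : ℕ) (hs : c.sum = m + 1) :
    (Pcomp c : ENNReal) * mu (m + 1) (Ach 1) = ENNReal.ofReal (Kk (bump c) 1 1) := by
  have hc : c ≠ [] := by rintro rfl; simp at hs
  have h1 : ∫ t in (0:ℝ)..1, V m false (pcf c) t = Kk (bump c) 1 1 := by
    rw [← V_eq_Kk c hc hp (by simp), hs]; rfl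
  rw [← h1, ← Mt_measure_all]
  unfold Pcomp numPeakSet
  rw [hs]
  symm
  apply measure_good
  intro σ z hz
  rw [← peak_iff σ c hp hs]
  exact Mt_congr m false (pcf c) z (fun i => ((σ i : Fin (m + 1)) : ℕ)) (fun i j => (hz i j).trans Iff.rfl)

theorem bridge_le (c b : List ℕ) (hc : ∀ a ∈ c, 0 < a) (hb : ∀ a ∈ b, 0 < a) (h0 : c.sum ≠ 0)
    (hs : b.sum = c.sum) (h : Pcomp b ≤ Pcomp c) (hpos : 0 < Kk (bump b) 1 1) :
    Kk (bump b) 1 1 ≤ Kk (bump c) 1 1 := by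
  obtain ⟨m, hm⟩ := Nat.exists_eq_succ_of_ne_zero h0
  have h1 := bridge c hc m hm
  have h2 := bridge b hb m (hs.trans hm)
  have h3 : ENNReal.ofReal (Kk (bump b) 1 1) ≤ ENNReal.ofReal (Kk (bump c) 1 1) := by
    rw [← h1, ← h2]
    gcongr
  rcases ENNReal.ofReal_le_ofReal_iff'.1 h3 with h | h
  · exact h
  · linarith
end helpers


theorem bump_append (l : List ℕ) (a : ℕ) : bump (l ++ [a]) = l ++ [a + 1] := by
  induction l with
  | nil => rfl
  | cons b l ih =>
    cases l with
    | nil => rfl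
    | cons b' l => simp only [List.cons_append, bump] at *; rw [ih]

theorem chain3_congr {x y : ℕ → List ℕ} {k : ℕ} (h : ∀ i ≤ k, x i = y i) :
    chain3 x k = chain3 y k := by
  induction k with
  | zero => exact h 0 le_rfl
  | succ k ih =>
    simp only [chain3]
    rw [ih (fun i hi => h i (by omega)), h (k + 1) le_rfl]

def GG (l : List ℕ) : Prop := ∃ (k : ℕ) (x : ℕ → List ℕ), 1 ≤ k ∧ l = chain3 x k ∧
  (x 0 = [] ∨ x 0 = [4]) ∧ x k = [] ∧ (∀ i, 0 < i → i < k → x i = [] ∨ x i = [2] ∨ x i = [4])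

theorem chain3_upd {x : ℕ → List ℕ} {k : ℕ} (hk : 1 ≤ k) (hx : x k = []) (v : List ℕ) (y : ℕ → List ℕ)
    (hy : ∀ i < k, y i = x i) (hyk : y k = v) : chain3 y k = chain3 x k ++ v := by
  obtain ⟨j, rfl⟩ : ∃ j, k = j + 1 := ⟨k - 1, by omega⟩
  simp only [chain3]
  rw [hx, hyk, chain3_congr (x := y) (y := x) (fun i hi => hy i (by omega))]
  simp

theorem GG_step {l v : List ℕ} (h : GG l) (hv : v = [] ∨ v = [2] ∨ v = [4]) : GG (l ++ v ++ [3]) := by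
  obtain ⟨k, x, hk, rfl, h0, hxk, hm⟩ := h
  refine ⟨k + 1, fun i => if i = k then v else if i = k + 1 then [] else x i, by omega, ?_, ?_, ?_, ?_⟩
  · simp only [chain3]
    rw [chain3_upd hk hxk v (fun i => if i = k then v else if i = k + 1 then [] else x i)]
    · simp
    · intro i hi
      rw [if_neg (by omega), if_neg (by omega)]
    · simp
  · simp only
    rw [if_neg (by omega), if_neg (by omega)]; exact h0
  · simp
  · intro i h1 h2
    simp only
    by_cases hi : i = k
    · rw [if_pos hi]; exact hv
    · rw [if_neg hi, if_neg (by omega)]; exact hm i h1 (by omega)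

theorem GG_final {l v : List ℕ} (h : GG l) (hv : v = [] ∨ v = [2] ∨ v = [2, 2]) :
    ∃ (k : ℕ) (x : ℕ → List ℕ), 1 ≤ k ∧ l ++ v = chain3 x k ∧
      (x 0 = [] ∨ x 0 = [4]) ∧
      (x k = [] ∨ x k = [2] ∨ x k = [2, 2]) ∧
      (∀ i, 0 < i → i < k → x i = [] ∨ x i = [2] ∨ x i = [4]) := by
  obtain ⟨k, x, hk, rfl, h0, hxk, hm⟩ := h
  refine ⟨k, fun i => if i = k then v else x i, hk, ?_, ?_, ?_, ?_⟩
  · rw [chain3_upd hk hxk v (fun i => if i = k then v else x i)]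
    · intro i hi
      rw [if_neg (by omega)]
    · simp
  · simp only
    rw [if_neg (by omega)]; exact h0
  · simpa using hv
  · intro i h1 h2
    simp only
    rw [if_neg (by omega)]; exact hm i h1 h2

def HH (l : List ℕ) : Prop := (∀ a ∈ l, a = 2 ∨ a = 3 ∨ a = 4) ∧
  (∀ L a b R, l = L ++ (a :: b :: R) → a = 3 ∨ b = 3) ∧ ∀ R, l ≠ 2 :: R

theorem HH_prefix {l r : List ℕ} (h : HH (l ++ r)) : HH l := by
  obtain ⟨h1, h2, h3⟩ := h
  refine ⟨fun a ha => h1 a (by simp [ha]), ?_, ?_⟩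
  · rintro L a b R rfl
    exact h2 L a b (R ++ r) (by simp)
  · rintro R rfl
    exact h3 (R ++ r) rfl

theorem HH_GG (n : ℕ) : ∀ l : List ℕ, l.length ≤ n → HH (l ++ [3]) → GG (l ++ [3]) := by
  induction n with
  | zero =>
    intro l hl _
    have : l = [] := List.length_eq_zero_iff.1 (by omega)
    subst this
    exact ⟨1, fun _ => [], le_rfl, by simp [chain3], by simp, rfl, by intro i _ _; simp⟩
  | succ n ih =>
    intro l hl h
    rcases List.eq_nil_or_concat l with rfl | ⟨l', v, rfl⟩
    · exact ih [] (by simp) h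
    rw [List.concat_eq_append] at *
    have hl' : l'.length ≤ n := by simpa using hl
    rcases h.1 v (by simp) with rfl | rfl | rfl
    · rcases List.eq_nil_or_concat l' with rfl | ⟨l2, u, rfl⟩
      · exact absurd rfl (h.2.2 [3])
      rw [List.concat_eq_append] at *
      have hu := h.2.1 l2 u 2 [3] (by simp)
      simp at hu
      subst hu
      exact GG_step (v := [2]) (ih l2 (by simp at hl'; omega)
        (HH_prefix (r := [2, 3]) (by simpa using h))) (by simp)
    · have := GG_step (v := []) (ih l' hl' (HH_prefix (r := [3]) (by simpa using h))) (by simp)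
      simpa using this
    · rcases List.eq_nil_or_concat l' with rfl | ⟨l2, u, rfl⟩
      · refine ⟨1, fun i => if i = 0 then [4] else [], le_rfl, by simp [chain3], by simp, rfl, ?_⟩
        intro i _ _; omega
      rw [List.concat_eq_append] at *
      have hu := h.2.1 l2 u 4 [3] (by simp)
      simp at hu
      subst hu
      exact GG_step (v := [4]) (ih l2 (by simp at hl'; omega)
        (HH_prefix (r := [4, 3]) (by simpa using h))) (by simp)

theorem opt_of_max (c : List ℕ) (hc : ∀ a ∈ c, 0 < a) (hne : c ≠ []) (hmax : IsMaximal c)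
    (d' : List ℕ) (hd : d' ≠ []) (h2 : ∀ a ∈ d', 2 ≤ a) (hs : d'.sum = c.sum + 1) :
    Kk d' 1 1 ≤ Kk (bump c) 1 1 := by
  rcases List.eq_nil_or_concat d' with rfl | ⟨l, a, rfl⟩
  · exact absurd rfl hd
  rw [List.concat_eq_append] at *
  have ha := h2 a (by simp)
  have e : bump (l ++ [a - 1]) = l ++ [a] := by rw [bump_append]; congr 2; omega
  have hb : ∀ b ∈ l ++ [a - 1], 0 < b := by
    intro b hb
    rcases List.mem_append.1 hb with h | h
    · have := h2 b (by simp [h]); omega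
    · simp at h; omega
  have hsum : (l ++ [a - 1]).sum = c.sum := by simp at hs ⊢; omega
  have h0 : c.sum ≠ 0 := by
    obtain ⟨b, l', rfl⟩ := List.exists_cons_of_ne_nil hne
    have := hc b (by simp)
    simp; omega
  have := bridge_le c (l ++ [a - 1]) hc hb h0 hsum (hmax _ ⟨hb, hsum⟩)
    (by rw [e]; exact Kk_pos hd h2 one_pos one_pos)
  rwa [e] at this

theorem HH_of_opt (d : List ℕ) (hlen : 3 ≤ d.length) (h1 : ∀ a ∈ d, 1 ≤ a)
    (hopt : ∀ d' : List ℕ, d' ≠ [] → (∀ a ∈ d', 2 ≤ a) → d'.sum = d.sum → Kk d' 1 1 ≤ Kk d 1 1) :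
    HH d ∧ (∀ L, d ≠ L ++ [2]) ∧ ∀ L, d ≠ L ++ [3, 4, 3] := by
  have hge : ∀ a ∈ d, 2 ≤ a := by
    intro a ha
    by_contra h
    have h1' : a = 1 := by have := h1 a ha; omega
    subst h1'
    have hle : d.length ≤ d.sum := List.length_le_sum_of_one_le d h1
    have h3 := hopt [d.sum] (by simp) (by simp; omega) (by simp)
    rw [Kk_one_mem ha] at h3
    have := Kk_pos (l := [d.sum]) (by simp) (by simp; omega) one_pos one_pos
    linarith
  have rep : ∀ (L B R B' : List ℕ), d = L ++ (B ++ R) → B ≠ [] → B' ≠ [] → (∀ a ∈ B', 2 ≤ a) →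
      B'.sum = B.sum → (∀ x y : ℝ, (L = [] ∧ x = 1 ∨ L ≠ [] ∧ 0 < x ∧ x < 1) →
        (R = [] ∧ y = 1 ∨ R ≠ [] ∧ 0 < y ∧ y < 1) → Kk B x y < Kk B' x y) → False := by
    intro L B R B' hd hB hB' hB2 hsum h
    have hL : ∀ a ∈ L, 2 ≤ a := fun a ha => hge a (by simp [hd, ha])
    have hR : ∀ a ∈ R, 2 ≤ a := fun a ha => hge a (by simp [hd, ha])
    have h3 := Kk_replace hB hB' hL hR h
    rw [← hd] at h3
    have h4 := hopt (L ++ (B' ++ R)) (by simp [hB']) (by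
      intro a ha
      simp only [List.mem_append] at ha
      rcases ha with ha | ha | ha
      · exact hL a ha
      · exact hB2 a ha
      · exact hR a ha) (by rw [hd]; simp [hsum])
    linarith
  have bd : ∀ {L : List ℕ} {x : ℝ}, (L = [] ∧ x = 1 ∨ L ≠ [] ∧ 0 < x ∧ x < 1) → 0 < x ∧ x ≤ 1 := by
    rintro L x (⟨_, rfl⟩ | ⟨_, h, h'⟩)
    · exact ⟨one_pos, le_rfl⟩
    · exact ⟨h, h'.le⟩
  have hle4 : ∀ a ∈ d, a ≤ 4 := by
    intro a ha
    by_contra h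
    obtain ⟨L, R, hd⟩ := List.append_of_mem ha
    by_cases h5 : a = 5
    · subst h5
      refine rep L [5] R [3, 2] hd (by simp) (by simp) (by simp) (by simp) ?_
      intro x y hx hy
      refine ineq_5 (bd hx).1 (bd hx).2 (bd hy).1 (bd hy).2 ?_
      rcases hx with hx | hx
      · rcases hy with hy | hy
        · rw [hd, hx.1, hy.1] at hlen
          simp at hlen
        · exact Or.inr hy.2.2
      · exact Or.inl hx.2.2
    · obtain ⟨b, e, hb, he, hbe, hi⟩ := ineq_big a (by omega)
      refine rep L [a] R [b, e] hd (by simp) (by simp) (by simp [hb, he]) (by simp [hbe]) ?_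
      intro x y hx hy
      exact hi x y (bd hx).1 (bd hx).2 (bd hy).1 (bd hy).2
  have hall : ∀ a ∈ d, a = 2 ∨ a = 3 ∨ a = 4 := by
    intro a ha
    have := hge a ha
    have := hle4 a ha
    omega
  have f44 : ∀ L R, d ≠ L ++ 4 :: 4 :: R := by
    intro L R hd
    refine rep L [4, 4] R [3, 2, 3] hd (by simp) (by simp) (by simp) (by simp) ?_
    intro x y hx hy
    exact ineq_44 (bd hx).1 (bd hx).2 (bd hy).1 (bd hy).2
  have f24 : ∀ L R, d ≠ L ++ 2 :: 4 :: R := by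
    intro L R hd
    refine rep L [2, 4] R [3, 3] hd (by simp) (by simp) (by simp) (by simp) ?_
    intro x y hx hy
    exact ineq_24 (bd hx).1 (bd hy).1 (bd hy).2
  have f42 : ∀ L R, d ≠ L ++ 4 :: 2 :: R := by
    intro L R hd
    refine rep L [4, 2] R [3, 3] hd (by simp) (by simp) (by simp) (by simp) ?_
    intro x y hx hy
    exact ineq_42 (bd hx).1 (bd hx).2 (bd hy).1
  have f222 : ∀ L R, d ≠ L ++ 2 :: 2 :: 2 :: R := by
    intro L R hd
    refine rep L [2, 2, 2] R [3, 3] hd (by simp) (by simp) (by simp) (by simp) ?_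
    intro x y hx hy
    exact ineq_222 (bd hx).1 (bd hy).1 (bd hy).2
  have f3223 : ∀ L R, d ≠ L ++ 3 :: 2 :: 2 :: 3 :: R := by
    intro L R hd
    refine rep L [3, 2, 2, 3] R [3, 4, 3] hd (by simp) (by simp) (by simp) (by simp) ?_
    intro x y hx hy
    exact ineq_3223 (bd hx).1 (bd hy).1
  have s22 : ∀ R, d ≠ 2 :: 2 :: R := by
    intro R hd
    refine rep [] [2, 2] R [4] hd (by simp) (by simp) (by simp) (by simp) ?_
    intro x y hx hy
    simp at hx; subst hx
    exact ineq_start22 (bd hy).1 (bd hy).2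
  have s23 : ∀ R, d ≠ 2 :: 3 :: R := by
    intro R hd
    have hR : R ≠ [] := by rintro rfl; rw [hd] at hlen; simp at hlen
    refine rep [] [2, 3] R [3, 2] hd (by simp) (by simp) (by simp) (by simp) ?_
    intro x y hx hy
    simp at hx; subst hx
    simp [hR] at hy
    exact ineq_start23 hy.1 hy.2
  have e22 : ∀ L, d ≠ L ++ [2, 2] := by
    intro L hd
    refine rep L [2, 2] [] [4] (by simpa using hd) (by simp) (by simp) (by simp) (by simp) ?_
    intro x y hx hy
    simp at hy; subst hy
    exact ineq_end22 (bd hx).1 (bd hx).2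
  have e32 : ∀ L, d ≠ L ++ [3, 2] := by
    intro L hd
    have hL : L ≠ [] := by rintro rfl; rw [hd] at hlen; simp at hlen
    refine rep L [3, 2] [] [2, 3] (by simpa using hd) (by simp) (by simp) (by simp) (by simp) ?_
    intro x y hx hy
    simp at hy; subst hy
    simp [hL] at hx
    exact ineq_end32 hx.1 hx.2
  have e343 : ∀ L, d ≠ L ++ [3, 4, 3] := by
    intro L hd
    refine rep L [3, 4, 3] [] [3, 3, 4] (by simpa using hd) (by simp) (by simp) (by simp) (by simp) ?_
    intro x y hx hy
    simp at hy; subst hy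
    exact ineq_end343 (bd hx).1
  have first : ∀ R, d ≠ 2 :: R := by
    intro R hd
    rcases R with _ | ⟨b, R⟩
    · rw [hd] at hlen; simp at hlen
    · rcases hall b (by simp [hd]) with rfl | rfl | rfl
      · exact s22 R hd
      · exact s23 R hd
      · exact f24 [] R hd
  have last : ∀ L, d ≠ L ++ [2] := by
    intro L hd
    rcases List.eq_nil_or_concat L with rfl | ⟨L, b, rfl⟩
    · rw [hd] at hlen; simp at hlen
    · rw [List.concat_eq_append, List.append_assoc] at hd
      rcases hall b (by simp [hd]) with rfl | rfl | rfl
      · exact e22 L hd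
      · exact e32 L hd
      · exact f42 L [] hd
  have f22 : ∀ L R, d ≠ L ++ 2 :: 2 :: R := by
    intro L R hd
    rcases R with _ | ⟨q, R⟩
    · exact e22 L hd
    rcases List.eq_nil_or_concat L with rfl | ⟨L, b, rfl⟩
    · exact first _ hd
    rw [List.concat_eq_append, List.append_assoc] at hd
    rcases hall b (by simp [hd]) with rfl | rfl | rfl
    · exact f222 _ _ hd
    · rcases hall q (by simp [hd]) with rfl | rfl | rfl
      · exact f222 (L ++ [3]) R (by simpa using hd)
      · exact f3223 _ _ hd
      · exact f24 (L ++ [3, 2]) R (by simpa using hd)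
    · exact f42 _ _ hd
  refine ⟨⟨hall, ?_, first⟩, last, e343⟩
  intro L a b R hd
  rcases hall a (by simp [hd]) with rfl | rfl | rfl
  · rcases hall b (by simp [hd]) with rfl | rfl | rfl
    · exact absurd hd (f22 _ _)
    · simp
    · exact absurd hd (f24 _ _)
  · simp
  · rcases hall b (by simp [hd]) with rfl | rfl | rfl
    · exact absurd hd (f42 _ _)
    · simp
    · exact absurd hd (f44 _ _)

theorem canonical_form_two (n : ℕ) (c : List ℕ) (hc : IsComposition n c)
    (hlen : 3 ≤ c.length) (hmax : IsMaximal c) :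
    ∃ (k : ℕ) (x : ℕ → List ℕ), 1 ≤ k ∧ c = chain3 x k ∧
      (x 0 = [] ∨ x 0 = [4]) ∧
      (x k = [] ∨ x k = [2] ∨ x k = [2, 2]) ∧
      (∀ i, 0 < i → i < k → x i = [] ∨ x i = [2] ∨ x i = [4]) := by
  have hne : c ≠ [] := by rintro rfl; simp at hlen
  have hopt := opt_of_max c hc.1 hne hmax
  have hpos := hc.1
  clear hmax hc
  rcases List.eq_nil_or_concat c with rfl | ⟨C, e, rfl⟩
  · exact absurd rfl hne
  rw [List.concat_eq_append] at *
  rw [bump_append] at hopt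
  have hlenC : 2 ≤ C.length := by simp at hlen; omega
  obtain ⟨hH, hlast, h343⟩ := HH_of_opt (C ++ [e + 1]) (by simp; omega) (by
    intro a ha
    rcases List.mem_append.1 ha with h | h
    · exact hpos a (by simp [h])
    · simp at h; omega) (by
    intro d' h1 h2 h3
    exact hopt d' h1 h2 (by rw [h3]; simp; omega))
  clear hopt
  rcases List.eq_nil_or_concat C with rfl | ⟨C1, u, rfl⟩
  · simp at hlenC
  rw [List.concat_eq_append] at *
  have hC1 : C1 ≠ [] := by rintro rfl; simp at hlenC
  obtain ⟨C2, w, hw⟩ := (List.eq_nil_or_concat C1).resolve_left hC1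
  rw [List.concat_eq_append] at hw
  have he := hH.1 (e + 1) (by simp)
  have hpair := hH.2.1 C1 u (e + 1) [] (by simp)
  have hpair2 := hH.2.1 C2 w u [e + 1] (by simp [hw])
  rcases he with he | he | he
  · exact absurd (by rw [he]) (hlast (C1 ++ [u]))
  · have he' : e = 2 := by omega
    subst he'
    rcases hH.1 u (by simp) with rfl | rfl | rfl
    · have hw3 : w = 3 := by omega
      subst hw3
      have hG := HH_GG _ C2 le_rfl (HH_prefix (r := [2, 3]) (by simpa [hw] using hH))
      have := GG_final (v := [2, 2]) hG (by simp)
      simpa [hw] using this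
    · have hG := HH_GG _ C1 le_rfl (HH_prefix (r := [3]) (by simpa using hH))
      exact GG_final (v := [2]) hG (by simp)
    · have hw3 : w = 3 := by omega
      subst hw3
      exact absurd (by simp [hw]) (h343 C2)
  · have he' : e = 3 := by omega
    subst he'
    have hu : u = 3 := by omega
    subst hu
    have h3 : HH (C1 ++ [3]) := HH_prefix (r := [4]) hH
    have hG := GG_step (v := []) (HH_GG _ C1 le_rfl h3) (by simp)
    have := GG_final (v := []) hG (by simp)
    simpa using this
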